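/- arXiv:1507.08247 — 2 statements merged into one kernel-verified Lean document; each statement's English description precedes it below -/
import Mathlib

section
/- Let k ∈ ℕ₀, 0 < θ < 1/2 and σ > 0. Let T̂₁ and T̂₂ be the closed triangles in ℝ² with vertices (0,0), (1,0), (0,−1) and (0,0), (1,0), (0,1) respectively, let Ê be their common edge (the segment from (0,0) to (1,0)) and let B̂ be the ball of maximal radius contained in the interior of T̂₁ ∪ T̂₂, with center ẑ and radius r̂; define η_{B̂}(x) := exp(1/(|x − ẑ|²/r̂² − 1)) if |x − ẑ| < r̂ and η_{B̂}(x) := 0 otherwise. There exists a constant C, depending only on θ, k and σ, with the following property. Let T₁, T₂ be two closed nondegenerate triangles with minimum interior angle ≥ σ whose intersection E := T₁ ∩ T₂ is a common edge of both, of length h_E, and let F : T̂₁ ∪ T̂₂ → T₁ ∪ T₂ be a continuous bijection that is affine on each T̂ᵢ with F(T̂ᵢ) = Tᵢ; set η_E := η_{B̂} ∘ F^{−1}. For any polynomial p in one real variable of degree ≤ k, define v : T₁ ∪ T₂ → ℝ by v := V̂ ∘ F^{−1}, where V̂(x₁, x₂) := p(x₁). Then ∫_E v² dH¹ ≤ C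 · ∫_E v² η_E dH¹, and for i = 1, 2: |∇(v·η_E)|_{θ, int Tᵢ} ≤ C · h_E^{−1−θ} · ‖v·η_E‖_{L²(Tᵢ)} and ‖v·η_E‖_{L²(Tᵢ)} ≤ C · h_E^{1/2} · (∫_E v² dH¹)^{1/2}, where H¹ is the 1-dimensional Hausdorff measure, the gradient is taken on the interior of each Tᵢ, and |∇w|_{θ,G} := (|∂₁w|²_{θ,G} + |∂₂w|²_{θ,G})^{1/2}. -/
open MeasureTheory Metric Set Filter
open scoped Topology NNReal ENNReal

noncomputable section

abbrev E2 := EuclideanSpace ℝ (Fin 2)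

/-- Squared Gagliardo seminorm of order `s` on `G ⊆ ℝ²`. -/
def gagSq (s : ℝ) (G : Set E2) (v : E2 → ℝ) : ℝ :=
  ∫ x in G, ∫ y in G, (v x - v y) ^ 2 / dist x y ^ (2 + 2 * s)

/-- Partial derivative in the `i`-th coordinate direction. -/
def pd (i : Fin 2) (f : E2 → ℝ) (x : E2) : ℝ := fderiv ℝ f x (EuclideanSpace.single i 1)

/-- All interior angles of the triangle `t` are at least `σ`. -/
def angleLB (σ : ℝ) (t : Fin 3 → E2) : Prop :=
  ∀ i : Fin 3, σ ≤ EuclideanGeometry.angle (t (i + 1)) (t i) (t (i + 2))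

/-- The open reference triangle with vertices `(0,0)`, `(1,0)`, `(0,1)`. -/
def refTri : Set E2 := {x : E2 | 0 < x 0 ∧ 0 < x 1 ∧ x 0 + x 1 < 1}

/-- The vertices of the reference triangle. -/
def refVert : Fin 3 → E2 := ![0, EuclideanSpace.single 0 1, EuclideanSpace.single 1 1]

/-- The radius of the maximal ball contained in the reference triangle. -/
def incR : ℝ := 1 - Real.sqrt 2 / 2

/-- The center of the maximal ball contained in the reference triangle. -/
def incC : E2 := EuclideanSpace.single 0 incR + EuclideanSpace.single 1 incR

open Classical in
/-- The standard bump function of the ball with center `c` and radius `r`: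
`x ↦ exp(1/(|x−c|²/r² − 1))` inside the ball and `0` outside. -/
def etaBump (c : E2) (r : ℝ) (x : E2) : ℝ :=
  if dist x c < r then Real.exp (1 / ((dist x c) ^ 2 / r ^ 2 - 1)) else 0

/-- Evaluation of a polynomial in two variables. -/
def pfun (p : MvPolynomial (Fin 2) ℝ) (x : E2) : ℝ := MvPolynomial.eval (fun i => x i) p

/-- The vertices of the two reference triangles forming the reference edge patch. -/
def kiteVert (i : Fin 2) : Fin 3 → E2 :=
  ![0, EuclideanSpace.single 0 1, EuclideanSpace.single 1 (if i = 0 then (-1 : ℝ) else 1)]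

/-- The two closed reference triangles `T̂₁`, `T̂₂` sharing the edge `Ê`. -/
def kiteTri (i : Fin 2) : Set E2 := convexHull ℝ (Set.range (kiteVert i))

/-- The reference edge `Ê` from `(0,0)` to `(1,0)`. -/
def refEdge : Set E2 := segment ℝ 0 (EuclideanSpace.single 0 1)

/-- The center of the maximal ball contained in the interior of `T̂₁ ∪ T̂₂`. -/
def kiteC : E2 := EuclideanSpace.single 0 (Real.sqrt 2 - 1)

/-- The radius of the maximal ball contained in the interior of `T̂₁ ∪ T̂₂`. -/
def kiteR : ℝ := Real.sqrt 2 - 1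

/-!
All quantities are pulled back to the reference patch, where they are squares of continuous
seminorms on the finite-dimensional space of polynomials of degree at most `k`. Since the bubble is
positive near `ẑ`, the weighted integrals are even squares of norms, and so dominate all the others.
It remains to count powers of `h_E`. By the law of sines the angle bound makes `F` a similarity of
ratio `h_E` up to a constant factor. Hence areas scale like `h_E²` and the gradient of `v η_E` is
Lipschitz with a constant proportional to `h_E⁻²`. For `θ < 1` the Gagliardo seminorm of an
`L`-Lipschitz function on a set of diameter `O(h_E)` is at most a constant times `L h_E^{1-θ}` times
the square root of the area, and `h_E⁻² h_E^{1-θ} = h_E^{-1-θ}`.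
-/

open Polynomial

section PolynomialComparison

lemma exists_le_mul_of_homogeneous {V : Type*} [NormedAddCommGroup V] [NormedSpace ℝ V]
    [ProperSpace V] {P Q : V → ℝ} {n : ℕ} (hn : n ≠ 0) (hP : Continuous P) (hQ : Continuous Q)
    (hPn : ∀ (c : ℝ) (v : V), P (c • v) = c ^ n * P v)
    (hQn : ∀ (c : ℝ) (v : V), Q (c • v) = c ^ n * Q v) (hQ_pos : ∀ v ≠ 0, 0 < Q v) :
    ∃ C > 0, ∀ v, P v ≤ C * Q v := by
  have hne : ∀ v ∈ sphere (0 : V) 1, v ≠ 0 := fun v hv => ne_zero_of_mem_unit_sphere ⟨v, hv⟩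
  have hcont : ContinuousOn (fun v => P v / Q v) (sphere 0 1) :=
    hP.continuousOn.div hQ.continuousOn fun v hv => (hQ_pos v (hne v hv)).ne'
  obtain ⟨M, hM⟩ := (isCompact_sphere (0 : V) 1).bddAbove_image hcont
  refine ⟨max M 1, by positivity, fun v => ?_⟩
  rcases eq_or_ne v 0 with rfl | hv
  · have hP0 := hPn 0 0
    have hQ0 := hQn 0 0
    simp only [zero_smul, zero_pow hn, zero_mul] at hP0 hQ0
    simp [hP0, hQ0]
  have hv' : ‖v‖⁻¹ • v ∈ sphere (0 : V) 1 := by simp [norm_smul, hv]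
  calc P v = ‖v‖ ^ n * P (‖v‖⁻¹ • v) := by rw [← hPn, smul_inv_smul₀ (norm_ne_zero_iff.2 hv)]
    _ ≤ ‖v‖ ^ n * (max M 1 * Q (‖v‖⁻¹ • v)) := by
      gcongr
      rw [← div_le_iff₀ (hQ_pos _ (hne _ hv'))]
      exact (hM (mem_image_of_mem _ hv')).trans (le_max_left M 1)
    _ = max M 1 * Q v := by
      rw [mul_left_comm, ← hQn, smul_inv_smul₀ (norm_ne_zero_iff.2 hv)]

lemma eval_ofFn {R : Type*} [CommSemiring R] [DecidableEq R] {n : ℕ} (a : Fin n → R) (t : R) :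
    (ofFn n a).eval t = ∑ j, a j * t ^ (j : ℕ) := by
  simp [ofFn_eq_sum_monomial, eval_finsetSum]

variable {X : Type*} [TopologicalSpace X] [MeasurableSpace X] [BorelSpace X]
  {μ : Measure X} [IsLocallyFiniteMeasure μ] {K : Set X} {φ w : X → ℝ}

lemma continuous_setIntegral_sq_eval_ofFn (n : ℕ) (hK : IsCompact K) (hφ : Continuous φ)
    (hw : Continuous w) :
    Continuous fun a : Fin n → ℝ => ∫ x in K, (ofFn n a).eval (φ x) ^ 2 * w x ∂μ := by
  simp only [eval_ofFn]
  exact continuous_parametric_integral_of_continuous (by fun_prop) hK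

variable [T2Space X]

lemma setIntegral_sq_eval_mul_pos [μ.IsOpenPosMeasure]
    (hK : IsCompact K) (hφ : Continuous φ) (hφ_open : IsOpenMap φ) (hw : Continuous w)
    (hw_nonneg : ∀ x, 0 ≤ w x) {x₀ : X} (hx₀ : x₀ ∈ interior K) (hwx₀ : w x₀ ≠ 0)
    {q : ℝ[X]} (hq : q ≠ 0) :
    0 < ∫ x in K, q.eval (φ x) ^ 2 * w x ∂μ := by
  have hf : Continuous fun x => q.eval (φ x) ^ 2 * w x := by fun_prop
  have hU : IsOpen (interior K ∩ Function.support w) := isOpen_interior.inter hw.isOpen_support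
  have hinf : (φ '' (interior K ∩ Function.support w)).Infinite :=
    infinite_of_mem_nhds _ ((hφ_open _ hU).mem_nhds (mem_image_of_mem φ ⟨hx₀, hwx₀⟩))
  obtain ⟨_, ⟨x, hx, rfl⟩, hqx⟩ : ∃ t ∈ φ '' (interior K ∩ Function.support w), ¬ q.IsRoot t := by
    by_contra! h
    exact hq (eq_zero_of_infinite_isRoot q (hinf.mono h))
  rw [setIntegral_pos_iff_support_of_nonneg_ae
    (Eventually.of_forall fun x => mul_nonneg (sq_nonneg _) (hw_nonneg x))
    (hf.continuousOn.integrableOn_compact' hK hK.measurableSet)]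
  have hV := (hf.isOpen_support.inter isOpen_interior).measure_pos μ
    ⟨x, mul_ne_zero (pow_ne_zero 2 hqx) hx.2, hx.1⟩
  exact hV.trans_le (measure_mono (inter_subset_inter_right _ interior_subset))

lemma exists_le_mul_setIntegral_sq_eval [μ.IsOpenPosMeasure] (k : ℕ) {P : ℝ[X] → ℝ}
    (hP : Continuous fun a => P (ofFn (k + 1) a)) (hP_smul : ∀ (c : ℝ) q, P (c • q) = c ^ 2 * P q)
    (hK : IsCompact K) (hφ : Continuous φ) (hφ_open : IsOpenMap φ) (hw : Continuous w)
    (hw_nonneg : ∀ x, 0 ≤ w x) {x₀ : X} (hx₀ : x₀ ∈ interior K) (hwx₀ : w x₀ ≠ 0) :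
    ∃ C > 0, ∀ q : ℝ[X], q.natDegree ≤ k → P q ≤ C * ∫ x in K, q.eval (φ x) ^ 2 * w x ∂μ := by
  obtain ⟨C, hC, h⟩ := exists_le_mul_of_homogeneous two_ne_zero hP
    (continuous_setIntegral_sq_eval_ofFn (μ := μ) (k + 1) hK hφ hw)
    (fun c a => by rw [map_smul, hP_smul])
    (fun c a => by
      simp only [map_smul, eval_smul, smul_eq_mul, mul_pow, mul_assoc, integral_const_mul])
    (fun a ha => setIntegral_sq_eval_mul_pos hK hφ hφ_open hw hw_nonneg hx₀ hwx₀
      ((map_ne_zero_iff _ (injective_ofFn _)).2 ha))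
  refine ⟨C, hC, fun q hq => ?_⟩
  simpa only [ofFn_comp_toFn_eq_id_of_natDegree_lt (Nat.lt_succ_of_le hq)] using
    h (toFn (k + 1) q)

end PolynomialComparison

lemma exists_lipschitzWith_fderiv_eval_mul {E : Type*} [NormedAddCommGroup E] [NormedSpace ℝ E]
    (k : ℕ) {φ η : E → ℝ} (hφ : ContDiff ℝ 2 φ) (hη : ContDiff ℝ 2 η)
    (hη_supp : HasCompactSupport η) :
    ∃ L : ℝ≥0, ∀ q : ℝ[X], q.natDegree ≤ k →
      LipschitzWith (L * ‖toFn (k + 1) q‖₊) (fderiv ℝ fun x => q.eval (φ x) * η x) := by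
  have hmono : ∀ j : ℕ, ContDiff ℝ 2 fun x => φ x ^ j * η x := fun j => (hφ.pow j).mul hη
  have hlip : ∀ j : ℕ, ∃ L, LipschitzWith L (fderiv ℝ fun x => φ x ^ j * η x) := fun j =>
    ContDiff.lipschitzWith_of_hasCompactSupport (hη_supp.mul_left.fderiv ℝ)
      ((hmono j).fderiv_right (m := 1) (by norm_num)) one_ne_zero
  choose L hL using hlip
  refine ⟨∑ j : Fin (k + 1), L j, fun q hq => LipschitzWith.of_dist_le_mul fun x y => ?_⟩
  have hderiv : ∀ x, fderiv ℝ (fun x => q.eval (φ x) * η x) x =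
      ∑ j : Fin (k + 1), q.coeff j • fderiv ℝ (fun x => φ x ^ (j : ℕ) * η x) x := by
    intro x
    simp only [eval_eq_sum_range' (Nat.lt_succ_of_le hq), Finset.sum_range, Finset.sum_mul,
      mul_assoc]
    refine (HasFDerivAt.fun_sum fun j _ => HasFDerivAt.const_mul ?_ _).fderiv
    exact ((hmono j).differentiable two_ne_zero x).hasFDerivAt
  rw [hderiv, hderiv]
  push_cast
  rw [Finset.sum_mul, Finset.sum_mul]
  refine dist_sum_sum_le_of_le _ fun j _ => ?_
  rw [dist_eq_norm, ← smul_sub, norm_smul, ← dist_eq_norm]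
  calc ‖q.coeff j‖ * dist (fderiv ℝ (fun x => φ x ^ (j : ℕ) * η x) x)
        (fderiv ℝ (fun x => φ x ^ (j : ℕ) * η x) y)
      ≤ ‖toFn (k + 1) q‖ * (L j * dist x y) := by
        gcongr
        · exact norm_le_pi_norm (toFn (k + 1) q) j
        · exact (hL j).dist_le_mul x y
    _ = L j * ‖toFn (k + 1) q‖ * dist x y := by ring

section SegmentIntegral

variable {E F : Type*} [NormedAddCommGroup E] [NormedSpace ℝ E] [MeasurableSpace E] [BorelSpace E]
  [NormedAddCommGroup F] [NormedSpace ℝ F]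

lemma hausdorffMeasure_restrict_segment (a b : E) :
    μH[1].restrict (segment ℝ a b) =
      nndist a b • (volume.restrict (Icc (0 : ℝ) 1)).map (AffineMap.lineMap a b) := by
  have hcont : Measurable (AffineMap.lineMap a b : ℝ → E) :=
    AffineMap.lineMap_continuous.measurable
  ext s hs
  rw [Measure.restrict_apply hs, Measure.smul_apply, Measure.map_apply hcont hs,
    Measure.restrict_apply (hcont hs), segment_eq_image_lineMap, inter_comm, ← image_inter_preimage,
    hausdorffMeasure_lineMap_image, hausdorffMeasure_real, inter_comm]

lemma setIntegral_segment_hausdorffMeasure (a b : E) (f : E → F) :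
    ∫ y in segment ℝ a b, f y ∂μH[1] =
      dist a b • ∫ t in Icc (0 : ℝ) 1, f (AffineMap.lineMap a b t) := by
  rw [hausdorffMeasure_restrict_segment, integral_smul_nnreal_measure, NNReal.smul_def,
    coe_nndist]
  rcases eq_or_ne a b with rfl | hab
  · simp
  · have hemb : MeasurableEmbedding (AffineMap.lineMap a b : ℝ → E) :=
      ((antilipschitzWith_lineMap (𝕜 := ℝ) hab).isClosedEmbedding
        (lipschitzWith_lineMap a b).uniformContinuous).measurableEmbedding
    rw [hemb.integral_map]

end SegmentIntegral

section AffineMaps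

variable {E : Type*} [NormedAddCommGroup E] [NormedSpace ℝ E]

lemma lipschitzWith_fderiv_comp {E' F : Type*} [NormedAddCommGroup E'] [NormedSpace ℝ E']
    [NormedAddCommGroup F] [NormedSpace ℝ F] {f : E → F} {A : E' →ᴬ[ℝ] E} {K L : ℝ≥0}
    (hf : Differentiable ℝ f) (hL : LipschitzWith L (fderiv ℝ f)) (hA : LipschitzWith K A) :
    LipschitzWith (L * K * K) (fderiv ℝ (f ∘ A)) := by
  have hderiv : ∀ x, fderiv ℝ (f ∘ A) x = (fderiv ℝ f (A x)).comp A.contLinear := fun x =>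
    ((hf (A x)).hasFDerivAt.comp x A.hasFDerivAt).fderiv
  have hA' : ‖A.contLinear‖ ≤ K := (A.hasFDerivAt (x := 0)).le_of_lipschitz hA
  refine LipschitzWith.of_dist_le_mul fun x y => ?_
  rw [hderiv, hderiv, dist_eq_norm, ← ContinuousLinearMap.sub_comp]
  calc ‖(fderiv ℝ f (A x) - fderiv ℝ f (A y)).comp A.contLinear‖
      ≤ ‖fderiv ℝ f (A x) - fderiv ℝ f (A y)‖ * ‖A.contLinear‖ :=
        ContinuousLinearMap.opNorm_comp_le _ _
    _ ≤ L * (K * dist x y) * K := by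
        rw [← dist_eq_norm]
        gcongr
        exact (hL.dist_le_mul _ _).trans (by gcongr; exact hA.dist_le_mul x y)
    _ = (L * K * K : ℝ≥0) * dist x y := by push_cast; ring

variable [FiniteDimensional ℝ E]

lemma exists_continuousAffineMap_leftInverse {F : E →ᵃ[ℝ] E} {K : ℝ≥0}
    (hF : AntilipschitzWith K F) :
    ∃ A : E →ᴬ[ℝ] E, LipschitzWith K A ∧ Function.LeftInverse A F := by
  have hbij : Function.Bijective F := ⟨hF.injective, F.linear_surjective_iff.1
    (LinearMap.surjective_of_injective (F.linear_injective_iff.2 hF.injective))⟩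
  let e := AffineEquiv.ofBijective hbij
  exact ⟨⟨e.symm, e.symm.toAffineMap.continuous_of_finiteDimensional⟩,
    hF.to_rightInverse e.apply_symm_apply, e.symm_apply_apply⟩

lemma lipschitzOnWith_fderiv_comp_leftInverse {F' : Type*} [NormedAddCommGroup F']
    [NormedSpace ℝ F'] {F : E →ᵃ[ℝ] E} {G : E → E} {s : Set E}
    {f : E → F'} {K L : ℝ≥0} (hF : AntilipschitzWith K F) (hG : ∀ x ∈ s, G (F x) = x)
    (hf : Differentiable ℝ f) (hL : LipschitzWith L (fderiv ℝ f)) :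
    LipschitzOnWith (L * K * K) (fderiv ℝ (f ∘ G)) (interior (F '' s)) := by
  obtain ⟨A, hA, hAF⟩ := exists_continuousAffineMap_leftInverse hF
  have hGA : EqOn G A (F '' s) := by
    rintro _ ⟨x, hx, rfl⟩
    rw [hG x hx, hAF]
  have hderiv : EqOn (fderiv ℝ (f ∘ G)) (fderiv ℝ (f ∘ A)) (interior (F '' s)) := by
    refine fun y hy => Filter.EventuallyEq.fderiv_eq ?_
    filter_upwards [mem_interior_iff_mem_nhds.1 hy] with z hz
    rw [Function.comp_apply, hGA hz, Function.comp_apply]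
  intro x hx y hy
  rw [hderiv hx, hderiv hy]
  exact lipschitzWith_fderiv_comp hf hL hA x y

lemma setIntegral_image_affineMap [MeasurableSpace E] [BorelSpace E] {F' : Type*}
    [NormedAddCommGroup F'] [NormedSpace ℝ F'] (μ : Measure E) [μ.IsAddHaarMeasure]
    {F : E →ᵃ[ℝ] E} {s : Set E} (hs : MeasurableSet s) (hF : InjOn F s) (g : E → F') :
    ∫ y in F '' s, g y ∂μ = |LinearMap.det F.linear| • ∫ x in s, g (F x) ∂μ := by
  let A : E →ᴬ[ℝ] E := ⟨F, F.continuous_of_finiteDimensional⟩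
  rw [← integral_smul]
  exact integral_image_eq_integral_abs_det_fderiv_smul μ hs
    (fun x _ => A.hasFDerivAt.hasFDerivWithinAt) hF g

end AffineMaps

section SingularIntegral

lemma setIntegral_ball_dist_rpow_neg {E : Type*} [NormedAddCommGroup E] [MeasurableSpace E]
    [BorelSpace E] (μ : Measure E) [μ.IsAddRightInvariant] (α : ℝ) (x : E) (r : ℝ) :
    ∫ y in ball x r, dist x y ^ (-α) ∂μ = ∫ z in ball (0 : E) r, ‖z‖ ^ (-α) ∂μ := by
  have h := (measurePreserving_sub_right μ x).setIntegral_preimage_emb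
    (MeasurableEquiv.subRight x).measurableEmbedding (fun z => ‖z‖ ^ (-α)) (ball 0 r)
  have hball : (· - x) ⁻¹' ball 0 r = ball x r := by ext; simp [dist_eq_norm]
  simpa only [hball, ← dist_eq_norm_sub'] using h

lemma sq_sub_div_dist_rpow_le {X : Type*} [PseudoMetricSpace X] {v : X → ℝ} {L : ℝ≥0} {s : Set X}
    (hv : LipschitzOnWith L v s) (α : ℝ) {x y : X} (hx : x ∈ s) (hy : y ∈ s) :
    (v x - v y) ^ 2 / dist x y ^ (2 + α) ≤ L ^ 2 * dist x y ^ (-α) := by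
  have hvxy : (v x - v y) ^ 2 ≤ (L * dist x y) ^ 2 := by
    rw [← sq_abs, ← Real.dist_eq]
    gcongr
    exact hv.dist_le_mul x hx y hy
  rcases (dist_nonneg (x := x) (y := y)).eq_or_lt with hd | hd
  · rw [← hd, mul_zero, zero_pow two_ne_zero] at hvxy
    rw [hvxy.antisymm (sq_nonneg _), zero_div]
    positivity
  · rw [Real.rpow_add hd, Real.rpow_neg hd.le, Real.rpow_two, div_le_iff₀ (by positivity)]
    exact hvxy.trans_eq (by field_simp)

variable {E : Type*} [NormedAddCommGroup E] [NormedSpace ℝ E] [FiniteDimensional ℝ E]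
  [MeasurableSpace E] [BorelSpace E] (μ : Measure E) [μ.IsAddHaarMeasure] {α r : ℝ}

lemma setIntegral_ball_norm_rpow_neg (α : ℝ) (hr : 0 < r) :
    ∫ z in ball (0 : E) r, ‖z‖ ^ (-α) ∂μ =
      r ^ (Module.finrank ℝ E - α) * ∫ z in ball (0 : E) 1, ‖z‖ ^ (-α) ∂μ := by
  have h := Measure.setIntegral_comp_smul_of_pos μ (fun z : E => ‖z‖ ^ (-α)) (ball 0 1) hr
  rw [smul_unitBall_of_pos hr, eq_inv_smul_iff₀ (by positivity)] at h
  rw [← h, Real.rpow_sub hr, Real.rpow_natCast, div_eq_mul_inv, ← Real.rpow_neg hr.le]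
  simp_rw [norm_smul, Real.norm_of_nonneg hr.le, Real.mul_rpow hr.le (norm_nonneg _),
    integral_const_mul, smul_eq_mul, mul_assoc]

variable [Nontrivial E]

lemma integrableOn_ball_dist_rpow_neg (hα : α < Module.finrank ℝ E) (x : E) (r : ℝ) :
    IntegrableOn (fun y => dist x y ^ (-α)) (ball x r) μ := by
  have h : IntegrableOn (fun z : E => ‖z‖ ^ (-α)) (ball 0 r) μ :=
    integrableOn_ball_of_norm_le_rpow Module.finrank_pos hα (C := 1)
      (Eventually.of_forall fun z => by rw [one_mul, Real.norm_of_nonneg (by positivity)])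
      (measurable_norm.pow_const _).aestronglyMeasurable
  have hpre := ((measurePreserving_sub_right μ x).integrableOn_comp_preimage
    (MeasurableEquiv.subRight x).measurableEmbedding).2 h
  convert hpre using 1
  · ext y
    simp [dist_eq_norm_sub']
  · ext y
    simp [dist_eq_norm]

lemma setIntegral_sq_sub_div_dist_rpow_le (hα : α < Module.finrank ℝ E) {U : Set E}
    (hU : MeasurableSet U) {v : E → ℝ} {L : ℝ≥0} (hv : LipschitzOnWith L v U) {x : E}
    (hx : x ∈ U) (hUr : U ⊆ ball x r) :
    ∫ y in U, (v x - v y) ^ 2 / dist x y ^ (2 + α) ∂μ ≤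
      L ^ 2 * ∫ z in ball (0 : E) r, ‖z‖ ^ (-α) ∂μ := by
  have h_int : IntegrableOn (fun y => L ^ 2 * dist x y ^ (-α)) (ball x r) μ :=
    (integrableOn_ball_dist_rpow_neg μ hα x r).const_mul _
  calc ∫ y in U, (v x - v y) ^ 2 / dist x y ^ (2 + α) ∂μ
      ≤ ∫ y in U, L ^ 2 * dist x y ^ (-α) ∂μ := by
        refine integral_mono_of_nonneg (Eventually.of_forall fun y => by positivity)
          (h_int.mono_set hUr) ?_
        filter_upwards [ae_restrict_mem hU] with y hy using sq_sub_div_dist_rpow_le hv α hx hy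
    _ ≤ ∫ y in ball x r, L ^ 2 * dist x y ^ (-α) ∂μ :=
        setIntegral_mono_set h_int (Eventually.of_forall fun y => by positivity) hUr.eventuallyLE
    _ = L ^ 2 * ∫ z in ball (0 : E) r, ‖z‖ ^ (-α) ∂μ := by
        rw [integral_const_mul, setIntegral_ball_dist_rpow_neg]

end SingularIntegral

section Seminorm

lemma gagSq_le_of_lipschitzOnWith {θ : ℝ} (hθ : θ < 1) {U : Set E2} (hU : MeasurableSet U) {r : ℝ}
    (hr : 0 < r) (hUr : ∀ x ∈ U, ∀ y ∈ U, dist x y < r) {v : E2 → ℝ} {L : ℝ≥0}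
    (hv : LipschitzOnWith L v U) :
    gagSq θ U v ≤ L ^ 2 * r ^ (2 - 2 * θ) * (∫ z in ball (0 : E2) 1, ‖z‖ ^ (-(2 * θ))) *
      volume.real U := by
  have hfin : volume U ≠ ∞ := Bornology.IsBounded.measure_lt_top
    (isBounded_iff.2 ⟨r, fun x hx y hy => (hUr x hx y hy).le⟩) |>.ne
  calc gagSq θ U v ≤ ∫ _ in U, L ^ 2 * ∫ z in ball (0 : E2) r, ‖z‖ ^ (-(2 * θ)) := by
        refine integral_mono_of_nonneg (Eventually.of_forall fun x =>
          integral_nonneg fun y => by positivity) (integrableOn_const hfin) ?_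
        filter_upwards [ae_restrict_mem hU] with x hx
        exact setIntegral_sq_sub_div_dist_rpow_le volume (by simpa using by linarith) hU hv hx
          fun y hy => hUr y hy x hx
    _ = _ := by
        rw [setIntegral_const, setIntegral_ball_norm_rpow_neg _ _ hr, finrank_euclideanSpace_fin,
          Nat.cast_ofNat, smul_eq_mul]
        ring

lemma lipschitzOnWith_pd {f : E2 → ℝ} {L : ℝ≥0} {s : Set E2}
    (hf : LipschitzOnWith L (fderiv ℝ f) s) (j : Fin 2) : LipschitzOnWith L (pd j f) s := by
  refine LipschitzOnWith.of_dist_le_mul fun x hx y hy => ?_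
  rw [pd, pd, dist_eq_norm, ← sub_apply]
  refine (ContinuousLinearMap.le_opNorm _ _).trans ?_
  rw [PiLp.norm_single, norm_one, mul_one, ← dist_eq_norm]
  exact hf.dist_le_mul x hx y hy

end Seminorm

section Bump

variable {c : E2} {r : ℝ}

lemma etaBump_nonneg (x : E2) : 0 ≤ etaBump c r x := by
  unfold etaBump
  split_ifs <;> positivity

lemma etaBump_pos {x : E2} (hx : dist x c < r) : 0 < etaBump c r x := by
  rw [etaBump, if_pos hx]
  exact Real.exp_pos _

lemma hasCompactSupport_etaBump : HasCompactSupport (etaBump c r) :=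
  HasCompactSupport.intro (isCompact_closedBall c r) fun _ hx =>
    if_neg fun h => hx (mem_closedBall.2 h.le)

lemma etaBump_eq_expNegInvGlue (hr : 0 < r) (x : E2) :
    etaBump c r x = expNegInvGlue (1 - dist x c ^ 2 / r ^ 2) := by
  have hlt : 1 - dist x c ^ 2 / r ^ 2 ≤ 0 ↔ ¬ dist x c < r := by
    rw [sub_nonpos, one_le_div (by positivity), not_lt, sq_le_sq₀ hr.le dist_nonneg]
  unfold etaBump expNegInvGlue
  simp only [hlt, ite_not]
  rw [one_div, ← inv_neg, neg_sub]

lemma contDiff_etaBump {n : ℕ∞} (hr : 0 < r) : ContDiff ℝ n (etaBump c r) := by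
  simp only [funext (etaBump_eq_expNegInvGlue (c := c) hr), dist_eq_norm]
  exact expNegInvGlue.contDiff.comp
    (contDiff_const.sub (((contDiff_id.sub contDiff_const).norm_sq ℝ).div_const _))

end Bump

section ReferencePatch

/-- The sign of the second coordinate on `T̂ᵢ`. It lets both reference triangles be treated at once:
`T̂ᵢ` is the set of `x` with `0 ≤ x₀`, `0 ≤ kiteSign i * x₁` and `x₀ + kiteSign i * x₁ ≤ 1`. -/
def kiteSign (i : Fin 2) : ℝ := if i = 0 then -1 else 1

lemma kiteSign_mul_self (i : Fin 2) : kiteSign i * kiteSign i = 1 := by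
  fin_cases i <;> simp [kiteSign]

lemma mem_kiteTri {i : Fin 2} {x : E2} (h₀ : 0 ≤ x 0) (h₁ : 0 ≤ kiteSign i * x 1)
    (h₂ : x 0 + kiteSign i * x 1 ≤ 1) : x ∈ kiteTri i := by
  have hcomb : x = ∑ j, (![1 - x 0 - kiteSign i * x 1, x 0, kiteSign i * x 1] : Fin 3 → ℝ) j •
      kiteVert i j := by
    have hs := kiteSign_mul_self i
    have hvert : kiteVert i 2 = EuclideanSpace.single 1 (kiteSign i) := rfl
    ext j
    rw [Fin.sum_univ_three, hvert]
    fin_cases j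
    · simp [kiteVert]
    · simp [kiteVert]
      linear_combination (-x 1) * hs
  rw [hcomb]
  refine (convex_convexHull ℝ _).sum_mem (fun j _ => ?_) ?_ fun j _ =>
    subset_convexHull ℝ _ (mem_range_self j)
  · fin_cases j <;> simp <;> linarith
  · simp only [Fin.sum_univ_three, Matrix.cons_val]
    ring

lemma mem_interior_kiteTri {i : Fin 2} {x : E2} (h₀ : 0 < x 0) (h₁ : 0 < kiteSign i * x 1)
    (h₂ : x 0 + kiteSign i * x 1 < 1) : x ∈ interior (kiteTri i) := by
  have hopen : IsOpen {x : E2 | 0 < x 0 ∧ 0 < kiteSign i * x 1 ∧ x 0 + kiteSign i * x 1 < 1} := by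
    simp only [ofPred_and]
    refine (isOpen_lt ?_ ?_).inter ((isOpen_lt ?_ ?_).inter (isOpen_lt ?_ ?_)) <;> fun_prop
  exact interior_maximal (fun y hy => mem_kiteTri hy.1.le hy.2.1.le hy.2.2.le) hopen ⟨h₀, h₁, h₂⟩

lemma isCompact_kiteTri (i : Fin 2) : IsCompact (kiteTri i) :=
  (finite_range _).isCompact_convexHull ℝ

lemma kiteTri_subset_closedBall (i : Fin 2) : kiteTri i ⊆ closedBall 0 1 := by
  refine convexHull_min ?_ (convex_closedBall _ _)
  rintro _ ⟨j, rfl⟩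
  fin_cases j <;> fin_cases i <;> simp [kiteVert]

lemma refEdge_subset_kiteTri (i : Fin 2) : refEdge ⊆ kiteTri i :=
  (convex_convexHull ℝ _).segment_subset (subset_convexHull ℝ _ (mem_range_self 0))
    (subset_convexHull ℝ _ (mem_range_self 1))

lemma kiteC_eq_single : kiteC = EuclideanSpace.single 0 kiteR := rfl

lemma kiteR_pos : 0 < kiteR := sub_pos.2 Real.one_lt_sqrt_two

lemma kiteR_lt : kiteR < 2 / 3 := by
  have : √2 < 5 / 3 := (Real.sqrt_lt' (by norm_num)).2 (by norm_num)
  unfold kiteR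
  linarith

lemma exists_mem_interior_kiteTri_etaBump_ne_zero (i : Fin 2) :
    ∃ x ∈ interior (kiteTri i), etaBump kiteC kiteR x ≠ 0 := by
  have hpos := kiteR_pos
  have hlt := kiteR_lt
  have hs := kiteSign_mul_self i
  have hs1 : |kiteSign i| = 1 := by fin_cases i <;> simp [kiteSign]
  refine ⟨kiteC + EuclideanSpace.single 1 (kiteSign i * (kiteR / 2)), mem_interior_kiteTri ?_ ?_ ?_,
    (etaBump_pos ?_).ne'⟩
  · simpa [kiteC_eq_single] using hpos
  · simpa [kiteC_eq_single, ← mul_assoc, hs] using hpos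
  · have : kiteR + kiteR / 2 < 1 := by linarith
    simpa [kiteC_eq_single, ← mul_assoc, hs] using this
  · simpa [hs1, abs_of_pos hpos] using hpos

/-- The function `V̂ · η_{B̂}` on the reference patch, where `V̂(x) = q(x₀)`. -/
def edgeBubble (q : ℝ[X]) (x : E2) : ℝ := q.eval (x 0) * etaBump kiteC kiteR x

lemma contDiff_edgeBubble {n : ℕ∞} (q : ℝ[X]) : ContDiff ℝ n (edgeBubble q) :=
  ((q.contDiff_aeval n).comp (EuclideanSpace.proj (𝕜 := ℝ) (0 : Fin 2)).contDiff).mul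
    (contDiff_etaBump kiteR_pos)

lemma exists_lipschitzWith_fderiv_edgeBubble (k : ℕ) :
    ∃ L : ℝ≥0, ∀ q : ℝ[X], q.natDegree ≤ k →
      LipschitzWith (L * ‖toFn (k + 1) q‖₊) (fderiv ℝ (edgeBubble q)) :=
  exists_lipschitzWith_fderiv_eval_mul k (EuclideanSpace.proj (𝕜 := ℝ) (0 : Fin 2)).contDiff
    (contDiff_etaBump (n := 2) kiteR_pos) hasCompactSupport_etaBump

lemma edgeBubble_sq (q : ℝ[X]) (x : E2) :
    edgeBubble q x ^ 2 = q.eval (x 0) ^ 2 * etaBump kiteC kiteR x ^ 2 :=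
  mul_pow _ _ 2

lemma continuous_etaBump_kite : Continuous (etaBump kiteC kiteR) :=
  (contDiff_etaBump (n := 0) kiteR_pos).continuous

lemma exists_setIntegral_sq_eval_le_mul_etaBump (k : ℕ) :
    ∃ C > 0, ∀ q : ℝ[X], q.natDegree ≤ k →
      ∫ t in Icc (0 : ℝ) 1, q.eval t ^ 2 ≤
        C * ∫ t in Icc (0 : ℝ) 1,
          q.eval t ^ 2 * etaBump kiteC kiteR (EuclideanSpace.single 0 t) := by
  have hkite : dist (EuclideanSpace.single 0 kiteR) kiteC < kiteR := by
    simpa [kiteC_eq_single] using kiteR_pos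
  refine exists_le_mul_setIntegral_sq_eval k (φ := id) (x₀ := kiteR)
    (w := fun t => etaBump kiteC kiteR (EuclideanSpace.single 0 t)) ?_ ?_ isCompact_Icc
    continuous_id IsOpenMap.id ?_ (fun _ => etaBump_nonneg _) ?_ (etaBump_pos hkite).ne'
  · simpa using continuous_setIntegral_sq_eval_ofFn (μ := volume) (k + 1) isCompact_Icc
      continuous_id (continuous_const (y := (1 : ℝ)))
  · intro c q
    simp only [eval_smul, smul_eq_mul, mul_pow, integral_const_mul]
  · exact continuous_etaBump_kite.comp
      ((PiLp.continuous_toLp 2 _).comp (continuous_single (A := fun _ => ℝ) 0))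
  · rw [interior_Icc]
    exact ⟨kiteR_pos, kiteR_lt.trans (by norm_num)⟩

lemma exists_sq_norm_toFn_le (k : ℕ) (i : Fin 2) :
    ∃ C > 0, ∀ q : ℝ[X], q.natDegree ≤ k →
      ‖toFn (k + 1) q‖ ^ 2 ≤ C * ∫ x in kiteTri i, edgeBubble q x ^ 2 := by
  obtain ⟨x₀, hx₀, hηx₀⟩ := exists_mem_interior_kiteTri_etaBump_ne_zero i
  simp only [edgeBubble_sq]
  refine exists_le_mul_setIntegral_sq_eval k (P := fun q => ‖toFn (k + 1) q‖ ^ 2) ?_ ?_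
    (isCompact_kiteTri i) (by fun_prop) (PiLp.isOpenMap_apply 2 _ 0) (continuous_etaBump_kite.pow 2)
    (fun _ => sq_nonneg _) hx₀ (pow_ne_zero 2 hηx₀)
  · simp only [toFn_comp_ofFn_eq_id]
    fun_prop
  · intro c q
    simp [norm_smul, mul_pow]

lemma exists_setIntegral_sq_edgeBubble_le (k : ℕ) (i : Fin 2) :
    ∃ C > 0, ∀ q : ℝ[X], q.natDegree ≤ k →
      ∫ x in kiteTri i, edgeBubble q x ^ 2 ≤ C * ∫ t in Icc (0 : ℝ) 1, q.eval t ^ 2 := by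
  have hcont : Continuous fun a => ∫ x in kiteTri i, edgeBubble (ofFn (k + 1) a) x ^ 2 := by
    simp only [edgeBubble_sq]
    exact continuous_setIntegral_sq_eval_ofFn (k + 1) (isCompact_kiteTri i) (by fun_prop)
      (continuous_etaBump_kite.pow 2)
  have hsmul : ∀ (c : ℝ) q, ∫ x in kiteTri i, edgeBubble (c • q) x ^ 2 =
      c ^ 2 * ∫ x in kiteTri i, edgeBubble q x ^ 2 := fun c q => by
    simp only [edgeBubble, eval_smul, smul_eq_mul, mul_pow, mul_assoc, integral_const_mul]
  have h := exists_le_mul_setIntegral_sq_eval (μ := volume) k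
    (P := fun q => ∫ x in kiteTri i, edgeBubble q x ^ 2) hcont hsmul
    (isCompact_Icc (a := (0 : ℝ)) (b := 1)) continuous_id IsOpenMap.id continuous_const
    (fun _ => zero_le_one) (x₀ := 1 / 2) (by norm_num) one_ne_zero
  simpa only [id, mul_one] using h

end ReferencePatch

section ShapeRegularity

lemma sin_le_sin_of_le_pi_sub {σ t : ℝ} (hσ : 0 ≤ σ) (hσt : σ ≤ t) (ht : t ≤ Real.pi - σ) :
    Real.sin σ ≤ Real.sin t := by
  rcases le_total t (Real.pi / 2) with h | h
  · exact Real.sin_le_sin_of_le_of_le_pi_div_two (by linarith) h hσt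
  · rw [← Real.sin_pi_sub t]
    exact Real.sin_le_sin_of_le_of_le_pi_div_two (by linarith) (by linarith) (by linarith)

lemma abs_cos_le_cos_of_le_pi_sub {σ t : ℝ} (hσ : 0 ≤ σ) (hσt : σ ≤ t) (ht : t ≤ Real.pi - σ) :
    |Real.cos t| ≤ Real.cos σ := by
  rw [abs_le', ← Real.cos_pi_sub]
  constructor <;> apply Real.cos_le_cos_of_nonneg_of_le_pi <;> linarith

section Frames

variable {V : Type*} [NormedAddCommGroup V] [InnerProductSpace ℝ V] {u w : V} {κ s : ℝ}

lemma one_sub_mul_le_norm_add_sq (hκ : 0 ≤ κ) (huw : |inner ℝ u w| ≤ κ * (‖u‖ * ‖w‖)) :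
    (1 - κ) * (‖u‖ ^ 2 + ‖w‖ ^ 2) ≤ ‖u + w‖ ^ 2 := by
  have hAMGM : κ * (2 * ‖u‖ * ‖w‖) ≤ κ * (‖u‖ ^ 2 + ‖w‖ ^ 2) := by
    gcongr
    exact two_mul_le_add_sq _ _
  rw [norm_add_sq_real]
  linarith [(abs_le.1 huw).1]

lemma mul_norm_sq_le_norm_smul_add_smul_sq (hκ : 0 ≤ κ) (hκ1 : κ ≤ 1)
    (huw : |inner ℝ u w| ≤ κ * (‖u‖ * ‖w‖)) (hs : 0 ≤ s) (hs1 : s ≤ 1) (hsu : s * ‖u‖ ≤ ‖w‖)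
    (a b : ℝ) :
    (1 - κ) * ((s * ‖u‖) ^ 2 * (a ^ 2 + b ^ 2)) ≤ ‖a • u + b • w‖ ^ 2 := by
  have hinner : |inner ℝ (a • u) (b • w)| ≤ κ * (‖a • u‖ * ‖b • w‖) := by
    rw [inner_smul_left, inner_smul_right, conj_trivial, abs_mul, abs_mul, norm_smul, norm_smul]
    calc |a| * (|b| * |inner ℝ u w|) ≤ |a| * (|b| * (κ * (‖u‖ * ‖w‖))) := by gcongr
      _ = κ * (‖a‖ * ‖u‖ * (‖b‖ * ‖w‖)) := by simp only [Real.norm_eq_abs]; ring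
  have hsuu : s * ‖u‖ ≤ ‖u‖ := mul_le_of_le_one_left (norm_nonneg u) hs1
  calc (1 - κ) * ((s * ‖u‖) ^ 2 * (a ^ 2 + b ^ 2))
      = (1 - κ) * (a ^ 2 * (s * ‖u‖) ^ 2 + b ^ 2 * (s * ‖u‖) ^ 2) := by ring
    _ ≤ (1 - κ) * (a ^ 2 * ‖u‖ ^ 2 + b ^ 2 * ‖w‖ ^ 2) := by
        have := sub_nonneg.2 hκ1
        gcongr
    _ = (1 - κ) * (‖a • u‖ ^ 2 + ‖b • w‖ ^ 2) := by
        simp only [norm_smul, mul_pow, Real.norm_eq_abs, sq_abs]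
    _ ≤ ‖a • u + b • w‖ ^ 2 := one_sub_mul_le_norm_add_sq hκ hinner

lemma mul_norm_smul_add_smul_sq_le (hs : 0 ≤ s) (hs1 : s ≤ 1) (hsw : s * ‖w‖ ≤ ‖u‖) (a b : ℝ) :
    (s * ‖a • u + b • w‖) ^ 2 ≤ 2 * ‖u‖ ^ 2 * (a ^ 2 + b ^ 2) := by
  have hsu : s * ‖u‖ ≤ ‖u‖ := mul_le_of_le_one_left (norm_nonneg u) hs1
  have hnorm : s * ‖a • u + b • w‖ ≤ (|a| + |b|) * ‖u‖ :=
    calc s * ‖a • u + b • w‖ ≤ s * (|a| * ‖u‖ + |b| * ‖w‖) := by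
          gcongr
          simpa only [norm_smul, Real.norm_eq_abs] using norm_add_le (a • u) (b • w)
      _ = |a| * (s * ‖u‖) + |b| * (s * ‖w‖) := by ring
      _ ≤ |a| * ‖u‖ + |b| * ‖u‖ := by gcongr
      _ = (|a| + |b|) * ‖u‖ := by ring
  calc (s * ‖a • u + b • w‖) ^ 2 ≤ ((|a| + |b|) * ‖u‖) ^ 2 := by gcongr
    _ ≤ 2 * (|a| ^ 2 + |b| ^ 2) * ‖u‖ ^ 2 := by
        rw [mul_pow]
        gcongr
        exact add_sq_le
    _ = 2 * ‖u‖ ^ 2 * (a ^ 2 + b ^ 2) := by rw [sq_abs, sq_abs]; ring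

end Frames

lemma sin_mul_dist_le_dist {V P : Type*} [NormedAddCommGroup V] [InnerProductSpace ℝ V]
    [MetricSpace P] [NormedAddTorsor V P] {σ : ℝ} (hσ : 0 ≤ σ) {p₁ p₂ p₃ : P}
    (hle : σ ≤ EuclideanGeometry.angle p₁ p₂ p₃)
    (hge : EuclideanGeometry.angle p₁ p₂ p₃ ≤ Real.pi - σ) :
    Real.sin σ * dist p₂ p₃ ≤ dist p₁ p₃ :=
  calc Real.sin σ * dist p₂ p₃
      ≤ Real.sin (EuclideanGeometry.angle p₁ p₂ p₃) * dist p₂ p₃ := by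
        gcongr
        exact sin_le_sin_of_le_pi_sub hσ hle hge
    _ = Real.sin (EuclideanGeometry.angle p₃ p₁ p₂) * dist p₃ p₁ :=
        EuclideanGeometry.law_sin p₁ p₂ p₃
    _ ≤ dist p₁ p₃ := by
        rw [dist_comm p₃]
        exact mul_le_of_le_one_left dist_nonneg (Real.sin_le_one _)

lemma angleLB_mono {σ τ : ℝ} (h : σ ≤ τ) {t : Fin 3 → E2} (ht : angleLB τ t) : angleLB σ t :=
  fun i => h.trans (ht i)

section Triangle

variable {σ : ℝ} {t : Fin 3 → E2}

lemma angle_le_pi_sub_of_angleLB (hσ : 0 ≤ σ) (ht : angleLB σ t) (hne : t 0 ≠ t 1) (i : Fin 3) :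
    EuclideanGeometry.angle (t (i + 1)) (t i) (t (i + 2)) ≤ Real.pi - σ := by
  have hsum := EuclideanGeometry.angle_add_angle_add_angle_eq_pi (t 2) hne
  have h₀ : σ ≤ EuclideanGeometry.angle (t 1) (t 0) (t 2) := ht 0
  have h₁ : σ ≤ EuclideanGeometry.angle (t 2) (t 1) (t 0) := ht 1
  have h₂ : σ ≤ EuclideanGeometry.angle (t 0) (t 2) (t 1) := ht 2
  fin_cases i
  · change EuclideanGeometry.angle (t 1) (t 0) (t 2) ≤ _
    linarith
  · change EuclideanGeometry.angle (t 2) (t 1) (t 0) ≤ _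
    linarith
  · change EuclideanGeometry.angle (t 0) (t 2) (t 1) ≤ _
    linarith

lemma abs_inner_le_of_angleLB (hσ : 0 ≤ σ) (ht : angleLB σ t) (hne : t 0 ≠ t 1) :
    |inner ℝ (t 1 - t 0) (t 2 - t 0)| ≤ Real.cos σ * (‖t 1 - t 0‖ * ‖t 2 - t 0‖) := by
  rw [← InnerProductGeometry.cos_angle_mul_norm_mul_norm, abs_mul,
    abs_of_nonneg (by positivity : 0 ≤ ‖t 1 - t 0‖ * ‖t 2 - t 0‖)]
  gcongr
  exact abs_cos_le_cos_of_le_pi_sub hσ (ht 0) (angle_le_pi_sub_of_angleLB hσ ht hne 0)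

lemma sin_mul_norm_le_of_angleLB (hσ : 0 ≤ σ) (ht : angleLB σ t) (hne : t 0 ≠ t 1) :
    Real.sin σ * ‖t 1 - t 0‖ ≤ ‖t 2 - t 0‖ ∧ Real.sin σ * ‖t 2 - t 0‖ ≤ ‖t 1 - t 0‖ := by
  have hle := angle_le_pi_sub_of_angleLB hσ ht hne
  simp only [← dist_eq_norm]
  refine ⟨sin_mul_dist_le_dist hσ (ht 1) (hle 1), ?_⟩
  have h₂ := ht 2
  have hle₂ := hle 2
  rw [EuclideanGeometry.angle_comm] at h₂ hle₂
  exact sin_mul_dist_le_dist hσ h₂ hle₂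

end Triangle

/-- The length `h_E` of the image under `F` of the reference edge. -/
def edgeLength (F : E2 →ᵃ[ℝ] E2) : ℝ≥0 := nndist (F 0) (F (EuclideanSpace.single 0 1))

lemma affineMap_sub_eq_kiteVert (F : E2 →ᵃ[ℝ] E2) (i : Fin 2) (x y : E2) :
    F x - F y = (x 0 - y 0) • (F (kiteVert i 1) - F (kiteVert i 0)) +
      (kiteSign i * (x 1 - y 1)) • (F (kiteVert i 2) - F (kiteVert i 0)) := by
  have hvert : kiteVert i 2 = EuclideanSpace.single 1 (kiteSign i) := rfl
  have hs := kiteSign_mul_self i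
  simp only [← vsub_eq_sub (F _), ← F.linearMap_vsub, ← map_smul, ← map_add, hvert]
  congr 1
  ext j
  fin_cases j
  · simp [kiteVert]
  · simp [kiteVert]
    linear_combination (y 1 - x 1) * hs

lemma dist_sq_eq_kiteSign (i : Fin 2) (x y : E2) :
    dist x y ^ 2 = (x 0 - y 0) ^ 2 + (kiteSign i * (x 1 - y 1)) ^ 2 := by
  rw [dist_eq_norm, EuclideanSpace.real_norm_sq_eq, Fin.sum_univ_two, mul_pow, sq (kiteSign i),
    kiteSign_mul_self, one_mul]
  rfl

lemma dist_bounds_of_angleLB {σ : ℝ} (hσ : 0 ≤ σ) (hσ1 : σ ≤ 1) {i : Fin 2} {F : E2 →ᵃ[ℝ] E2}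
    (hF : 0 < edgeLength F) (hang : angleLB σ (fun j => F (kiteVert i j))) (x y : E2) :
    (1 - Real.cos σ) * Real.sin σ * (edgeLength F * dist x y) ≤ dist (F x) (F y) ∧
      Real.sin σ * dist (F x) (F y) ≤ 2 * (edgeLength F * dist x y) := by
  have hπ := Real.pi_gt_three
  have hs : 0 ≤ Real.sin σ := Real.sin_nonneg_of_nonneg_of_le_pi hσ (by linarith)
  have hκ : 0 ≤ Real.cos σ := Real.cos_nonneg_of_neg_pi_div_two_le_of_le (by linarith) (by linarith)
  have hκ1 := Real.cos_le_one σ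
  have hne : F (kiteVert i 0) ≠ F (kiteVert i 1) := dist_pos.1 hF
  have hlen : ‖F (kiteVert i 1) - F (kiteVert i 0)‖ = edgeLength F := by
    rw [← dist_eq_norm, dist_comm]
    rfl
  obtain ⟨hsu, hsw⟩ := sin_mul_norm_le_of_angleLB hσ hang hne
  have hlow := mul_norm_sq_le_norm_smul_add_smul_sq hκ hκ1
    (abs_inner_le_of_angleLB hσ hang hne) hs (Real.sin_le_one σ) hsu
    (x 0 - y 0) (kiteSign i * (x 1 - y 1))
  have hup := mul_norm_smul_add_smul_sq_le hs (Real.sin_le_one σ) hsw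
    (x 0 - y 0) (kiteSign i * (x 1 - y 1))
  rw [← dist_sq_eq_kiteSign, ← affineMap_sub_eq_kiteVert, hlen, ← dist_eq_norm] at hlow hup
  constructor
  · refine le_of_sq_le_sq (le_trans ?_ hlow) dist_nonneg
    calc ((1 - Real.cos σ) * Real.sin σ * (edgeLength F * dist x y)) ^ 2
        = (1 - Real.cos σ) ^ 2 * ((Real.sin σ * edgeLength F) ^ 2 * dist x y ^ 2) := by ring
      _ ≤ (1 - Real.cos σ) * ((Real.sin σ * edgeLength F) ^ 2 * dist x y ^ 2) := by
          gcongr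
          nlinarith
  · refine le_of_sq_le_sq (hup.trans ?_) (by positivity)
    nlinarith [sq_nonneg (edgeLength F * dist x y)]

/-- `F` scales distances by the factor `h`, up to a multiplicative constant `K`. The shape
regularity of a triangle is used only in this form, with `h` the length of an edge. -/
structure IsQuasiSimilarity {X Y : Type*} [PseudoEMetricSpace X] [PseudoEMetricSpace Y]
    (K h : ℝ≥0) (F : X → Y) : Prop where
  lipschitz : LipschitzWith (K * h) F
  antilipschitz : AntilipschitzWith (K / h) F

lemma exists_isQuasiSimilarity_of_angleLB {σ : ℝ} (hσ : 0 < σ) :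
    ∃ K : ℝ≥0, 0 < K ∧ ∀ (i : Fin 2) (F : E2 →ᵃ[ℝ] E2), 0 < edgeLength F →
      angleLB σ (fun j => F (kiteVert i j)) → IsQuasiSimilarity K (edgeLength F) F := by
  have hτ : 0 < min σ 1 := lt_min hσ one_pos
  have hτ1 : min σ 1 ≤ 1 := min_le_right _ _
  have hπ := Real.pi_gt_three
  have hs : 0 < Real.sin (min σ 1) := Real.sin_pos_of_pos_of_lt_pi hτ (by linarith)
  have hκ : Real.cos (min σ 1) < 1 := by
    simpa using Real.cos_lt_cos_of_nonneg_of_le_pi le_rfl (by linarith) hτ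
  have hκ0 : 0 ≤ Real.cos (min σ 1) :=
    Real.cos_nonneg_of_neg_pi_div_two_le_of_le (by linarith) (by linarith)
  obtain ⟨d, hd⟩ : ∃ d : ℝ≥0, (d : ℝ) = (1 - Real.cos (min σ 1)) * Real.sin (min σ 1) :=
    ⟨⟨_, mul_nonneg (by linarith) hs.le⟩, rfl⟩
  have hd0 : (0 : ℝ) < d := hd ▸ mul_pos (by linarith) hs
  have hds : (d : ℝ) ≤ Real.sin (min σ 1) := by rw [hd]; nlinarith
  refine ⟨2 / d, div_pos two_pos hd0, fun i F hF hang => ?_⟩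
  have hbd := dist_bounds_of_angleLB hτ.le hτ1 hF (angleLB_mono (min_le_left _ _) hang)
  simp only [← hd] at hbd
  have : (0 : ℝ) < edgeLength F := hF
  constructor
  · refine LipschitzWith.of_dist_le_mul fun x y => ?_
    have hup : d * dist (F x) (F y) ≤ 2 * (edgeLength F * dist x y) :=
      (mul_le_mul_of_nonneg_right hds dist_nonneg).trans (hbd x y).2
    push_cast
    rw [mul_assoc, div_mul_eq_mul_div, le_div_iff₀' hd0]
    exact hup
  · refine AntilipschitzWith.of_le_mul_dist fun x y => ?_
    push_cast
    rw [div_div, div_mul_eq_mul_div, le_div_iff₀' (by positivity), mul_assoc]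
    linarith [(hbd x y).1, dist_nonneg (x := F x) (y := F y)]

end ShapeRegularity

section Transfer

lemma abs_det_linear_le_of_lipschitzWith {E : Type*} [NormedAddCommGroup E] [NormedSpace ℝ E]
    [FiniteDimensional ℝ E] {F : E →ᵃ[ℝ] E} {K : ℝ≥0} (hF : LipschitzWith K F) :
    |LinearMap.det F.linear| ≤ K ^ Module.finrank ℝ E := by
  borelize E
  have himage : F.linear '' closedBall 0 1 ⊆ closedBall 0 K := by
    rintro _ ⟨v, hv, rfl⟩
    have hFv : F.linear v = F v - F 0 := by simpa using F.linearMap_vsub v 0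
    rw [mem_closedBall_zero_iff, hFv, ← dist_eq_norm]
    exact (hF.dist_le_mul v 0).trans (mul_le_of_le_one_right K.coe_nonneg hv)
  have hvol := measure_mono (μ := Measure.addHaar) himage
  rw [Measure.addHaar_image_linearMap, Measure.addHaar_closedBall' _ _ K.coe_nonneg,
    ENNReal.mul_le_mul_iff_left (measure_closedBall_pos _ _ one_pos).ne'
      measure_closedBall_lt_top.ne] at hvol
  exact (ENNReal.ofReal_le_ofReal_iff (by positivity)).1 hvol

lemma setIntegral_image_comp_leftInverse {E : Type*} [NormedAddCommGroup E] [NormedSpace ℝ E]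
    [FiniteDimensional ℝ E] [MeasurableSpace E] [BorelSpace E] (μ : Measure E) [μ.IsAddHaarMeasure]
    {F : E →ᵃ[ℝ] E} {G : E → E} {s : Set E} (hs : MeasurableSet s) (hG : ∀ x ∈ s, G (F x) = x)
    (f : E → ℝ) :
    ∫ y in F '' s, f (G y) ∂μ = |LinearMap.det F.linear| * ∫ x in s, f x ∂μ := by
  rw [setIntegral_image_affineMap μ hs (LeftInvOn.injOn hG), smul_eq_mul]
  congr 1
  exact setIntegral_congr_fun hs fun x hx => by rw [hG x hx]

variable {F : E2 →ᵃ[ℝ] E2} {G : E2 → E2}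

lemma edgeLength_pos (hG : ∀ x ∈ refEdge, G (F x) = x) : 0 < edgeLength F := by
  have hne : F 0 ≠ F (EuclideanSpace.single 0 1) :=
    (LeftInvOn.injOn hG).ne (left_mem_segment ℝ _ _) (right_mem_segment ℝ _ _) (by simp [eq_comm])
  exact pos_iff_ne_zero.2 (nndist_eq_zero.not.2 hne)

lemma lineMap_zero_single (t : ℝ) :
    AffineMap.lineMap (0 : E2) (EuclideanSpace.single 0 1) t = EuclideanSpace.single 0 t := by
  ext j
  fin_cases j <;> simp [AffineMap.lineMap_apply]

lemma single_mem_refEdge {t : ℝ} (ht : t ∈ Icc (0 : ℝ) 1) : EuclideanSpace.single 0 t ∈ refEdge :=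
  (segment_eq_image_lineMap ℝ (0 : E2) _).ge ⟨t, ht, lineMap_zero_single t⟩

lemma setIntegral_image_refEdge (hG : ∀ x ∈ refEdge, G (F x) = x) (f : E2 → ℝ) :
    ∫ y in F '' refEdge, f (G y) ∂μH[1] =
      edgeLength F * ∫ t in Icc (0 : ℝ) 1, f (EuclideanSpace.single 0 t) := by
  rw [refEdge, image_segment, setIntegral_segment_hausdorffMeasure, smul_eq_mul]
  congr 1
  refine setIntegral_congr_fun measurableSet_Icc fun t ht => ?_
  simp only [← AffineMap.apply_lineMap, lineMap_zero_single, hG _ (single_mem_refEdge ht)]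

lemma gagSq_pd_comp_leftInverse_le {θ : ℝ} (hθ : θ < 1) {K h : ℝ≥0} (hK : 0 < K) (hh : 0 < h)
    (hF : IsQuasiSimilarity K h F) {s : Set E2} (hs : s ⊆ closedBall 0 1)
    (hG : ∀ x ∈ s, G (F x) = x) {f : E2 → ℝ} (hf : Differentiable ℝ f) {L : ℝ≥0}
    (hL : LipschitzWith L (fderiv ℝ f)) (j : Fin 2) :
    gagSq θ (interior (F '' s)) (pd j (f ∘ G)) ≤
      L ^ 2 * (K ^ 4 * (3 * K) ^ (2 - 2 * θ) * ∫ z in ball (0 : E2) 1, ‖z‖ ^ (-(2 * θ))) *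
        (h ^ (-1 - θ) : ℝ) ^ 2 * volume.real (F '' s) := by
  have hdist : ∀ x ∈ F '' s, ∀ y ∈ F '' s, dist x y < 3 * K * h := by
    rintro _ ⟨x, hx, rfl⟩ _ ⟨y, hy, rfl⟩
    calc dist (F x) (F y) ≤ (K * h : ℝ≥0) * dist x y := hF.lipschitz.dist_le_mul x y
      _ ≤ (K * h : ℝ≥0) * (1 + 1) := by
          gcongr
          exact (dist_triangle_right x y 0).trans (add_le_add (hs hx) (hs hy))
      _ < 3 * K * h := by
          push_cast
          linarith [mul_pos (NNReal.coe_pos.2 hK) (NNReal.coe_pos.2 hh)]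
  have hbdd : Bornology.IsBounded (F '' s) :=
    isBounded_iff.2 ⟨_, fun x hx y hy => (hdist x hx y hy).le⟩
  have hscale : (h : ℝ) ^ (2 - 2 * θ) = h ^ 4 * (h ^ (-1 - θ) : ℝ) ^ 2 := by
    rw [← Real.rpow_mul_natCast h.coe_nonneg, ← Real.rpow_natCast,
      ← Real.rpow_add (NNReal.coe_pos.2 hh)]
    congr 1
    push_cast
    ring
  calc gagSq θ (interior (F '' s)) (pd j (f ∘ G))
      ≤ (L * (K / h) * (K / h) : ℝ≥0) ^ 2 * (3 * K * h : ℝ) ^ (2 - 2 * θ) *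
          (∫ z in ball (0 : E2) 1, ‖z‖ ^ (-(2 * θ))) * volume.real (interior (F '' s)) :=
        gagSq_le_of_lipschitzOnWith hθ isOpen_interior.measurableSet (by positivity)
          (fun x hx y hy => hdist x (interior_subset hx) y (interior_subset hy))
          (lipschitzOnWith_pd (lipschitzOnWith_fderiv_comp_leftInverse hF.antilipschitz hG hf hL) j)
    _ ≤ (L * (K / h) * (K / h) : ℝ≥0) ^ 2 * (3 * K * h : ℝ) ^ (2 - 2 * θ) *
          (∫ z in ball (0 : E2) 1, ‖z‖ ^ (-(2 * θ))) * volume.real (F '' s) := by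
        gcongr
        · exact hbdd.measure_lt_top.ne
        · exact interior_subset
    _ = _ := by
        rw [Real.mul_rpow (by positivity) h.coe_nonneg, hscale]
        push_cast
        field_simp

end Transfer

section TriangleEstimates

lemma sqrt_le_mul_sqrt {a b c : ℝ} (hc : 0 ≤ c) (h : a ≤ c ^ 2 * b) : √a ≤ c * √b := by
  calc √a ≤ √(c ^ 2 * b) := Real.sqrt_le_sqrt h
    _ = c * √b := by rw [Real.sqrt_mul (sq_nonneg c), Real.sqrt_sq hc]

lemma exists_setIntegral_refEdge_sq_eval_le (k : ℕ) :
    ∃ C > 0, ∀ (F : E2 →ᵃ[ℝ] E2) (G : E2 → E2), (∀ x ∈ refEdge, G (F x) = x) →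
      ∀ q : ℝ[X], q.natDegree ≤ k →
        ∫ y in F '' refEdge, q.eval (G y 0) ^ 2 ∂μH[1] ≤
          C * ∫ y in F '' refEdge, q.eval (G y 0) ^ 2 * etaBump kiteC kiteR (G y) ∂μH[1] := by
  obtain ⟨C, hC, h⟩ := exists_setIntegral_sq_eval_le_mul_etaBump k
  refine ⟨C, hC, fun F G hG q hq => ?_⟩
  rw [setIntegral_image_refEdge hG fun x => q.eval (x 0) ^ 2,
    setIntegral_image_refEdge hG fun x => q.eval (x 0) ^ 2 * etaBump kiteC kiteR x, mul_left_comm]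
  gcongr
  simpa using h q hq

lemma exists_sqrt_sum_gagSq_pd_edgeBubble_le (k : ℕ) {θ : ℝ} (hθ : θ < 1) {K : ℝ≥0} (hK : 0 < K)
    (i : Fin 2) :
    ∃ C : ℝ, ∀ (F : E2 →ᵃ[ℝ] E2) (G : E2 → E2) (h : ℝ≥0), 0 < h → IsQuasiSimilarity K h F →
      (∀ x ∈ kiteTri i, G (F x) = x) → ∀ q : ℝ[X], q.natDegree ≤ k →
        √(∑ j, gagSq θ (interior (F '' kiteTri i)) (pd j (edgeBubble q ∘ G))) ≤
          C * (h : ℝ) ^ (-1 - θ) * √(∫ y in F '' kiteTri i, edgeBubble q (G y) ^ 2) := by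
  obtain ⟨L, hL⟩ := exists_lipschitzWith_fderiv_edgeBubble k
  obtain ⟨C₁, hC₁, hnorm⟩ := exists_sq_norm_toFn_le k i
  set S : ℝ := K ^ 4 * (3 * K) ^ (2 - 2 * θ) * ∫ z in ball (0 : E2) 1, ‖z‖ ^ (-(2 * θ))
  have : 0 ≤ S := mul_nonneg (by positivity) (integral_nonneg fun z => by positivity)
  set M : ℝ := 2 * L ^ 2 * S * volume.real (kiteTri i) * C₁ with hM
  have hM0 : 0 ≤ M := by positivity
  refine ⟨√M, fun F G h hh hF hG q hq => sqrt_le_mul_sqrt (by positivity) ?_⟩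
  have hmeas : MeasurableSet (kiteTri i) := (isCompact_kiteTri i).measurableSet
  have hvol : volume.real (F '' kiteTri i) =
      |LinearMap.det F.linear| * volume.real (kiteTri i) := by
    simpa using setIntegral_image_comp_leftInverse volume hmeas hG fun _ => 1
  have h_int := setIntegral_image_comp_leftInverse volume hmeas hG fun x => edgeBubble q x ^ 2
  calc ∑ j, gagSq θ (interior (F '' kiteTri i)) (pd j (edgeBubble q ∘ G))
      ≤ ∑ _ : Fin 2, (L * ‖toFn (k + 1) q‖₊ : ℝ≥0) ^ 2 * S * (h ^ (-1 - θ) : ℝ) ^ 2 *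
          volume.real (F '' kiteTri i) :=
        Finset.sum_le_sum fun j _ => gagSq_pd_comp_leftInverse_le hθ hK hh hF
          (kiteTri_subset_closedBall i) hG
          ((contDiff_edgeBubble (n := 1) q).differentiable one_ne_zero) (hL q hq) j
    _ = 2 * L ^ 2 * S * (h ^ (-1 - θ) : ℝ) ^ 2 * |LinearMap.det F.linear| *
          volume.real (kiteTri i) * ‖toFn (k + 1) q‖ ^ 2 := by
        rw [Fin.sum_univ_two, hvol]
        push_cast
        ring
    _ ≤ 2 * L ^ 2 * S * (h ^ (-1 - θ) : ℝ) ^ 2 * |LinearMap.det F.linear| *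
          volume.real (kiteTri i) * (C₁ * ∫ x in kiteTri i, edgeBubble q x ^ 2) := by
        gcongr
        exact hnorm q hq
    _ = (√M * h ^ (-1 - θ)) ^ 2 * ∫ y in F '' kiteTri i, edgeBubble q (G y) ^ 2 := by
        rw [mul_pow, Real.sq_sqrt hM0, h_int, hM]
        ring

lemma exists_sqrt_setIntegral_edgeBubble_sq_le (k : ℕ) (K : ℝ≥0) (i : Fin 2) :
    ∃ C : ℝ, ∀ (F : E2 →ᵃ[ℝ] E2) (G : E2 → E2), LipschitzWith (K * edgeLength F) F →
      (∀ x ∈ kiteTri i, G (F x) = x) → ∀ q : ℝ[X], q.natDegree ≤ k →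
        √(∫ y in F '' kiteTri i, edgeBubble q (G y) ^ 2) ≤
          C * (edgeLength F : ℝ) ^ (1 / 2 : ℝ) *
            √(∫ y in F '' refEdge, q.eval (G y 0) ^ 2 ∂μH[1]) := by
  obtain ⟨C, hC, hle⟩ := exists_setIntegral_sq_edgeBubble_le k i
  refine ⟨√(K ^ 2 * C), fun F G hF hG q hq => sqrt_le_mul_sqrt (by positivity) ?_⟩
  have hdet : |LinearMap.det F.linear| ≤ (K * edgeLength F) ^ 2 := by
    simpa using abs_det_linear_le_of_lipschitzWith hF
  calc ∫ y in F '' kiteTri i, edgeBubble q (G y) ^ 2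
      = |LinearMap.det F.linear| * ∫ x in kiteTri i, edgeBubble q x ^ 2 :=
        setIntegral_image_comp_leftInverse volume (isCompact_kiteTri i).measurableSet hG
          fun x => edgeBubble q x ^ 2
    _ ≤ (K * edgeLength F) ^ 2 * (C * ∫ t in Icc (0 : ℝ) 1, q.eval t ^ 2) :=
        mul_le_mul hdet (hle q hq) (integral_nonneg fun x => sq_nonneg _) (by positivity)
    _ = (√(K ^ 2 * C) * (edgeLength F : ℝ) ^ (1 / 2 : ℝ)) ^ 2 *
          ∫ y in F '' refEdge, q.eval (G y 0) ^ 2 ∂μH[1] := by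
        rw [setIntegral_image_refEdge (fun x hx => hG x (refEdge_subset_kiteTri i hx))
          fun x => q.eval (x 0) ^ 2, ← Real.sqrt_eq_rpow, mul_pow √_, Real.sq_sqrt (by positivity),
          Real.sq_sqrt (NNReal.coe_nonneg _)]
        simp only [PiLp.single_apply, if_true]
        ring

end TriangleEstimates

theorem cutoff_across_edges_general (k : ℕ) (θ σ : ℝ) (hθ : θ < 1) (hσ : 0 < σ) :
    ∃ C : ℝ, 0 < C ∧ ∀ (F : Fin 2 → E2 →ᵃ[ℝ] E2) (G : E2 → E2),
      (∀ x ∈ refEdge, F 0 x = F 1 x) →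
      (∀ i, ∀ x ∈ kiteTri i, G (F i x) = x) →
      (∀ i, angleLB σ (fun j => F i (kiteVert i j))) →
      ∀ q : ℝ[X], q.natDegree ≤ k →
        ((∫ y in F 0 '' refEdge, (q.eval (G y 0)) ^ 2 ∂(μH[1])) ≤
          C * ∫ y in F 0 '' refEdge,
            (q.eval (G y 0)) ^ 2 * etaBump kiteC kiteR (G y) ∂(μH[1])) ∧
        ∀ i : Fin 2,
          √(∑ j : Fin 2, gagSq θ (interior (F i '' kiteTri i))
              (pd j fun y => q.eval (G y 0) * etaBump kiteC kiteR (G y))) ≤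
            C * dist (F 0 0) (F 0 (EuclideanSpace.single 0 1)) ^ (-1 - θ) *
              √(∫ y in F i '' kiteTri i,
                (q.eval (G y 0) * etaBump kiteC kiteR (G y)) ^ 2) ∧
          √(∫ y in F i '' kiteTri i,
              (q.eval (G y 0) * etaBump kiteC kiteR (G y)) ^ 2) ≤
            C * dist (F 0 0) (F 0 (EuclideanSpace.single 0 1)) ^ ((1 : ℝ) / 2) *
              √(∫ y in F 0 '' refEdge, (q.eval (G y 0)) ^ 2 ∂(μH[1])) := by
  obtain ⟨K, hK, hquasi⟩ := exists_isQuasiSimilarity_of_angleLB hσ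
  obtain ⟨C₀, hC₀, hedge⟩ := exists_setIntegral_refEdge_sq_eval_le k
  choose C₁ hgrad using exists_sqrt_sum_gagSq_pd_edgeBubble_le k hθ hK
  choose C₂ hL2 using exists_sqrt_setIntegral_edgeBubble_sq_le k K
  obtain ⟨C, hC₀C, hCC₁, hCC₂⟩ : ∃ C, C₀ ≤ C ∧ (∀ i, C₁ i ≤ C) ∧ ∀ i, C₂ i ≤ C :=
    ⟨C₀ ⊔ (C₁ 0 ⊔ C₁ 1) ⊔ (C₂ 0 ⊔ C₂ 1), by simp [Fin.forall_fin_two]⟩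
  refine ⟨C, hC₀.trans_le hC₀C, fun F G hE hG hang q hq => ?_⟩
  have hE' : ∀ i, EqOn (F 0) (F i) refEdge := Fin.forall_fin_two.2 ⟨fun _ _ => rfl, hE⟩
  have hGE : ∀ x ∈ refEdge, G (F 0 x) = x := fun x hx => hG 0 x (refEdge_subset_kiteTri 0 hx)
  have hlen : ∀ i, edgeLength (F i) = edgeLength (F 0) := fun i => by
    rw [edgeLength, ← hE' i (left_mem_segment ℝ _ _), ← hE' i (right_mem_segment ℝ _ _), edgeLength]
  have hpos : ∀ i, 0 < edgeLength (F i) := fun i => hlen i ▸ edgeLength_pos hGE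
  refine ⟨(hedge (F 0) G hGE q hq).trans (mul_le_mul_of_nonneg_right hC₀C
    (integral_nonneg fun y => mul_nonneg (sq_nonneg _) (etaBump_nonneg _))), fun i => ?_⟩
  have hFi := hquasi i (F i) (hpos i) (hang i)
  have hgrad_i := hgrad i (F i) G _ (hpos i) hFi (hG i) q hq
  have hL2_i := hL2 i (F i) G hFi.lipschitz (hG i) q hq
  rw [hlen] at hgrad_i hL2_i
  rw [← (hE' i).image_eq] at hL2_i
  exact ⟨hgrad_i.trans (mul_le_mul_of_nonneg_right (mul_le_mul_of_nonneg_right (hCC₁ i)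
      (Real.rpow_nonneg dist_nonneg _)) (Real.sqrt_nonneg _)),
    hL2_i.trans (mul_le_mul_of_nonneg_right (mul_le_mul_of_nonneg_right (hCC₂ i)
      (Real.rpow_nonneg dist_nonneg _)) (Real.sqrt_nonneg _))⟩

/-- **Cut-off across edges** (Lemma 3.7): with `η_E := η_{B̂} ∘ F⁻¹` for the bump
function of the maximal ball `B̂` in the reference edge patch `T̂₁ ∪ T̂₂`, and
`v := V̂ ∘ F⁻¹` the extension of a one-variable polynomial of degree `≤ k`:
`∫_E v² ≲ ∫_E v² η_E`, `|∇(v η_E)|_{θ,Tᵢ} ≲ h_E^{−1−θ} ‖v η_E‖_{0,Tᵢ}` and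
`‖v η_E‖_{0,Tᵢ} ≲ h_E^{1/2} ‖v‖_{0,E}`. -/
theorem cutoff_across_edges (k : ℕ) (θ σ : ℝ) (hθ0 : 0 < θ) (hθ : θ < 1 / 2)
    (hσ : 0 < σ) :
    ∃ C : ℝ, 0 < C ∧ ∀ (F : Fin 2 → E2 →ᵃ[ℝ] E2) (G : E2 → E2),
      (∀ i, Function.Injective (F i)) →
      (∀ x ∈ refEdge, F 0 x = F 1 x) →
      (∀ i, ∀ x ∈ kiteTri i, G (F i x) = x) →
      (∀ i, angleLB σ (fun j => F i (kiteVert i j))) →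
      (F 0 '' kiteTri 0) ∩ (F 1 '' kiteTri 1) = F 0 '' refEdge →
      ∀ q : Polynomial ℝ, q.natDegree ≤ k →
        ((∫ y in F 0 '' refEdge, (q.eval (G y 0)) ^ 2 ∂(μH[1])) ≤
          C * ∫ y in F 0 '' refEdge,
            (q.eval (G y 0)) ^ 2 * etaBump kiteC kiteR (G y) ∂(μH[1])) ∧
        ∀ i : Fin 2,
          Real.sqrt (∑ j : Fin 2, gagSq θ (interior (F i '' kiteTri i))
              (pd j fun y => q.eval (G y 0) * etaBump kiteC kiteR (G y))) ≤
            C * dist (F 0 0) (F 0 (EuclideanSpace.single 0 1)) ^ (-1 - θ) *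
              Real.sqrt (∫ y in F i '' kiteTri i,
                (q.eval (G y 0) * etaBump kiteC kiteR (G y)) ^ 2) ∧
          Real.sqrt (∫ y in F i '' kiteTri i,
              (q.eval (G y 0) * etaBump kiteC kiteR (G y)) ^ 2) ≤
            C * dist (F 0 0) (F 0 (EuclideanSpace.single 0 1)) ^ ((1 : ℝ) / 2) *
              Real.sqrt (∫ y in F 0 '' refEdge, (q.eval (G y 0)) ^ 2 ∂(μH[1])) := by
  obtain ⟨C, hC, h⟩ := cutoff_across_edges_general k θ σ (by linarith) hσ
  exact ⟨C, hC, fun F G _ hE hG hang _ => h F G hE hG hang⟩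

end
end

section
/- Let 0 < θ < 1/2. There exists a constant C, depending only on θ, such that every w ∈ H¹(T̂) with |w|_{1+θ,T̂} < ∞ that admits a representative continuous on the closure of T̂ and vanishing at the three points (0,0), (1,0), (0,1) satisfies, for that continuous representative and all x, y in the closure of T̂: |w(x) − w(y)| ≤ C · |x − y|^θ · |w|_{1+θ,T̂}. -/
open MeasureTheory Metric Set Filter
open scoped Topology NNReal ENNReal

noncomputable section

/-- Finiteness of the Gagliardo seminorm. -/
def GagFin (s : ℝ) (G : Set E2) (v : E2 → ℝ) : Prop :=
  Integrable (fun p : E2 × E2 => (v p.1 - v p.2) ^ 2 / dist p.1 p.2 ^ (2 + 2 * s))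
    ((volume.restrict G).prod (volume.restrict G))

/-- Test functions: smooth compactly supported functions with support in `G`. -/
def IsTestFun (G : Set E2) (φ : E2 → ℝ) : Prop :=
  ContDiff ℝ (⊤ : ℕ∞) φ ∧ HasCompactSupport φ ∧ tsupport φ ⊆ G

/-- Weak partial derivative on an open set. -/
def HasWeakPD (G : Set E2) (i : Fin 2) (v g : E2 → ℝ) : Prop :=
  ∀ φ : E2 → ℝ, IsTestFun G φ →
    (∫ x in G, v x * pd i φ x) = - ∫ x in G, g x * φ x

/-!
The idea is to control point values by averages. Let `Φ` be a smooth probability density on the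
convex set `G`, and contract it towards a point `p` of the closure of `G`: `dilate p t Φ` has height
of order `t ^ (-2)` and lives at distance at most of order `t` from `p`. By the Cauchy–Schwarz
inequality the averages of a function `g` over two densities of comparable scale `t` differ by at
most a constant times `t ^ (θ - 1) * |g|_θ`. Summing this over dyadic scales, the average of `|g|`
at scale `t` is at most a constant times `t ^ (θ - 1) * |g|_θ` if `g` has mean zero against `Φ`.

Suppose first that this holds for the weak partial derivatives `g i` of `f`. As a density at scale
`h` is contracted to `p`, the average of `f` moves to `f p`; its derivative is an average of the
`g i`, so integrating the bound `t ^ (θ - 1)` puts `f p` within a constant times `h ^ θ` of the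
initial average. With `h` of order `dist x y`, one and the same density serves `p = x` and `p = y`,
which gives the Hölder bound for `f`.

In general, subtract from `f` the linear map `L` with the mean gradient. If `f` vanishes on a set
which affinely spans the plane, then the Hölder bound for `f - L` on this set bounds `L` itself.
-/

section ProbabilityAverages

lemma integral_abs_le_integral_abs_sub_add {X Y : Type*} [MeasurableSpace X] [MeasurableSpace Y]
    {μ : Measure X} {ν : Measure Y} [IsProbabilityMeasure μ] [IsProbabilityMeasure ν]
    {u : X → ℝ} {v : Y → ℝ} (hu : Integrable u μ) (hv : Integrable v ν) :
    ∫ x, |u x| ∂μ ≤ ∫ q, |u q.1 - v q.2| ∂μ.prod ν + |∫ y, v y ∂ν| := by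
  have hdiff : Integrable (fun q : X × Y => |u q.1 - v q.2|) (μ.prod ν) :=
    ((hu.comp_fst ν).sub (hv.comp_snd μ)).abs
  have hpointwise (x : X) : |u x| ≤ ∫ y, |u x - v y| ∂ν + |∫ y, v y ∂ν| := by
    have hmean : u x - ∫ y, v y ∂ν = ∫ y, (u x - v y) ∂ν := by
      rw [integral_sub (integrable_const _) hv, integral_const, probReal_univ, one_smul]
    calc |u x| ≤ |u x - ∫ y, v y ∂ν| + |∫ y, v y ∂ν| := by
          simpa using abs_add_le (u x - ∫ y, v y ∂ν) (∫ y, v y ∂ν)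
      _ ≤ _ := by rw [hmean]; gcongr; exact abs_integral_le_integral_abs
  calc ∫ x, |u x| ∂μ ≤ ∫ x, (∫ y, |u x - v y| ∂ν + |∫ y, v y ∂ν|) ∂μ :=
        integral_mono hu.abs (hdiff.integral_prod_left.add (integrable_const _)) hpointwise
    _ = _ := by
        rw [integral_add hdiff.integral_prod_left (integrable_const _), integral_prod _ hdiff,
          integral_const, probReal_univ, one_smul]

lemma integral_abs_le_sqrt_integral_sq {X : Type*} [MeasurableSpace X] {μ : Measure X}
    [IsProbabilityMeasure μ] {u : X → ℝ} (hu : MemLp u 2 μ) :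
    ∫ x, |u x| ∂μ ≤ √(∫ x, u x ^ 2 ∂μ) := by
  have hvar := ProbabilityTheory.variance_nonneg |u| μ
  rw [ProbabilityTheory.variance_eq_sub hu.abs] at hvar
  refine Real.le_sqrt_of_sq_le ?_
  simpa using hvar

lemma sq_sub_le_rpow_mul_div_dist_rpow {X : Type*} [MetricSpace X] {R α : ℝ} (hα : 0 ≤ α)
    (g : X → ℝ) {x y : X} (hxy : dist x y ≤ R) :
    (g x - g y) ^ 2 ≤ R ^ α * ((g x - g y) ^ 2 / dist x y ^ α) := by
  rcases eq_or_ne x y with rfl | hne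
  · simp
  · have hpos : 0 < dist x y := dist_pos.2 hne
    rw [mul_div_assoc', le_div_iff₀ (by positivity), mul_comm]
    gcongr

lemma integral_abs_sub_le_sqrt_gagliardo {X : Type*} [MetricSpace X] [MeasurableSpace X]
    {μ ν₁ ν₂ : Measure X} [SFinite μ] [IsProbabilityMeasure ν₁] [IsProbabilityMeasure ν₂]
    {g : X → ℝ} {b R β : ℝ} (hb : 0 ≤ b) (hR : 0 ≤ R) (hβ : 0 ≤ β)
    (hν₁ : ν₁ ≤ ENNReal.ofReal b • μ) (hν₂ : ν₂ ≤ ENNReal.ofReal b • μ)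
    (hdist : ∀ᵐ q ∂ν₁.prod ν₂, dist q.1 q.2 ≤ R) (hg : AEStronglyMeasurable g μ)
    (hgag : Integrable (fun q : X × X => (g q.1 - g q.2) ^ 2 / dist q.1 q.2 ^ (2 * β))
      (μ.prod μ)) :
    ∫ q, |g q.1 - g q.2| ∂ν₁.prod ν₂ ≤
      b * R ^ β * √(∫ q, (g q.1 - g q.2) ^ 2 / dist q.1 q.2 ^ (2 * β) ∂μ.prod μ) := by
  set k : X × X → ℝ := fun q => (g q.1 - g q.2) ^ 2 / dist q.1 q.2 ^ (2 * β)
  have hk_nonneg (q : X × X) : 0 ≤ k q := by positivity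
  have hprod : ν₁.prod ν₂ ≤ ENNReal.ofReal (b ^ 2) • μ.prod μ := by
    calc ν₁.prod ν₂ ≤ (ENNReal.ofReal b • μ).prod (ENNReal.ofReal b • μ) :=
          Measure.prod_mono hν₁ hν₂
      _ = _ := by
        rw [Measure.prod_smul_left, Measure.prod_smul_right, smul_smul,
          ← ENNReal.ofReal_mul hb, ← sq]
  have hk_smul : Integrable k (ENNReal.ofReal (b ^ 2) • μ.prod μ) :=
    hgag.smul_measure ENNReal.ofReal_ne_top
  have hk : Integrable k (ν₁.prod ν₂) := hk_smul.mono_measure hprod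
  have hsq_le : ∀ᵐ q ∂ν₁.prod ν₂, (g q.1 - g q.2) ^ 2 ≤ R ^ (2 * β) * k q :=
    hdist.mono fun q hq => sq_sub_le_rpow_mul_div_dist_rpow (by positivity) g hq
  have hg_abs (ν : Measure X) (hν : ν ≤ ENNReal.ofReal b • μ) : AEStronglyMeasurable g ν :=
    (hg.smul_measure _).mono_measure hν
  have hdiff_meas : AEStronglyMeasurable (fun q : X × X => g q.1 - g q.2) (ν₁.prod ν₂) :=
    (hg_abs ν₁ hν₁).comp_fst.sub (hg_abs ν₂ hν₂).comp_snd
  have hdiff_sq : Integrable (fun q : X × X => (g q.1 - g q.2) ^ 2) (ν₁.prod ν₂) :=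
    (hk.const_mul _).mono' (hdiff_meas.pow 2) <| hsq_le.mono fun q hq => by
      rwa [Real.norm_of_nonneg (sq_nonneg _)]
  calc ∫ q, |g q.1 - g q.2| ∂ν₁.prod ν₂ ≤ √(∫ q, (g q.1 - g q.2) ^ 2 ∂ν₁.prod ν₂) :=
        integral_abs_le_sqrt_integral_sq ((memLp_two_iff_integrable_sq hdiff_meas).2 hdiff_sq)
    _ ≤ √(R ^ (2 * β) * ∫ q, k q ∂ν₁.prod ν₂) := by
        rw [← integral_const_mul]
        exact Real.sqrt_le_sqrt (integral_mono_ae hdiff_sq (hk.const_mul _) hsq_le)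
    _ ≤ √(R ^ (2 * β) * (b ^ 2 * ∫ q, k q ∂μ.prod μ)) := by
        gcongr
        calc ∫ q, k q ∂ν₁.prod ν₂ ≤ ∫ q, k q ∂(ENNReal.ofReal (b ^ 2) • μ.prod μ) :=
              integral_mono_measure hprod (Eventually.of_forall hk_nonneg) hk_smul
          _ = b ^ 2 * ∫ q, k q ∂μ.prod μ := by
              rw [integral_smul_measure, ENNReal.toReal_ofReal (sq_nonneg b), smul_eq_mul]
    _ = √((b * R ^ β) ^ 2 * ∫ q, k q ∂μ.prod μ) := by
        rw [mul_comm 2 β, Real.rpow_mul hR, Real.rpow_two]; ring_nf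
    _ = b * R ^ β * √(∫ q, k q ∂μ.prod μ) := by
        rw [Real.sqrt_mul (sq_nonneg _), Real.sqrt_sq (by positivity)]

end ProbabilityAverages

section OneVariable

lemma le_rpow_of_dyadic_le {m : ℝ → ℝ} {A β : ℝ} (hA : 0 ≤ A) (hβ : 0 < β) (hm1 : m 1 = 0)
    (hm : ∀ t s, 0 < t → t ≤ s → s ≤ 2 * t → s ≤ 1 → m t ≤ A * t ^ (-β) + m s)
    {t : ℝ} (ht0 : 0 < t) (ht1 : t ≤ 1) : m t ≤ A / (1 - 2 ^ (-β)) * t ^ (-β) := by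
  have hq : (2 : ℝ) ^ (-β) < 1 := Real.rpow_lt_one_of_one_lt_of_neg one_lt_two (neg_lt_zero.2 hβ)
  set K := A / (1 - 2 ^ (-β))
  have hK : A + K * 2 ^ (-β) = K := by simp only [K]; field_simp [(sub_pos.2 hq).ne']; ring
  have hK0 : 0 ≤ K := div_nonneg hA (sub_pos.2 hq).le
  have hAK : A ≤ K := by rw [← hK]; exact le_add_of_nonneg_right (by positivity)
  obtain ⟨n, hn⟩ : ∃ n : ℕ, (1 / 2 : ℝ) ^ n ≤ t :=
    (exists_pow_lt_of_lt_one ht0 one_half_lt_one).imp fun _ => le_of_lt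
  induction n generalizing t with
  | zero =>
    obtain rfl : t = 1 := le_antisymm ht1 (by simpa using hn)
    simpa [hm1] using hK0
  | succ n ih =>
    rcases le_total (2 * t) 1 with h | h
    · calc m t ≤ A * t ^ (-β) + m (2 * t) := hm t (2 * t) ht0 (by linarith) le_rfl h
        _ ≤ A * t ^ (-β) + K * (2 * t) ^ (-β) := by
            gcongr
            exact ih (by linarith) h (by rw [pow_succ] at hn; linarith)
        _ = (A + K * 2 ^ (-β)) * t ^ (-β) := by rw [Real.mul_rpow two_pos.le ht0.le]; ring
        _ = K * t ^ (-β) := by rw [hK]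
    · calc m t ≤ A * t ^ (-β) + m 1 := hm t 1 ht0 ht1 h le_rfl
        _ ≤ K * t ^ (-β) := by rw [hm1, add_zero]; gcongr

lemma abs_sub_le_of_abs_deriv_le_rpow {f f' : ℝ → ℝ} {θ M a : ℝ} (hθ : 0 < θ) (hM : 0 ≤ M)
    (hderiv : ∀ t ∈ Ioc (0 : ℝ) 1, HasDerivAt f (f' t) t)
    (hbound : ∀ t ∈ Ioc (0 : ℝ) 1, |f' t| ≤ M * t ^ (θ - 1))
    (hlim : Tendsto f (𝓝[>] 0) (𝓝 a)) : |f 1 - a| ≤ M / θ := by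
  refine le_of_tendsto (tendsto_const_nhds.sub hlim).abs ?_
  filter_upwards [Ioo_mem_nhdsGT one_pos] with e he
  have hmem {t : ℝ} (ht : t ∈ Icc e 1) : t ∈ Ioc (0 : ℝ) 1 := ⟨he.1.trans_le ht.1, ht.2⟩
  have hB (t : ℝ) (ht : t ∈ Icc e 1) :
      HasDerivAt (fun t => M / θ * (t ^ θ - e ^ θ)) (M * t ^ (θ - 1)) t := by
    refine (((Real.hasDerivAt_rpow_const (Or.inl (hmem ht).1.ne')).sub_const
      (e ^ θ)).const_mul (M / θ)).congr_deriv ?_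
    field_simp
  have hf (t : ℝ) (ht : t ∈ Icc e 1) : HasDerivAt (fun t => f t - f e) (f' t) t :=
    (hderiv t (hmem ht)).sub_const _
  have hle : ‖f 1 - f e‖ ≤ M / θ * ((1 : ℝ) ^ θ - e ^ θ) :=
    image_norm_le_of_norm_deriv_right_le_deriv_boundary'
      (fun t ht => (hf t ht).continuousAt.continuousWithinAt)
      (fun t ht => (hf t (Ico_subset_Icc_self ht)).hasDerivWithinAt) (by simp)
      (fun t ht => (hB t ht).continuousAt.continuousWithinAt)
      (fun t ht => (hB t (Ico_subset_Icc_self ht)).hasDerivWithinAt)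
      (fun t ht => hbound t (hmem (Ico_subset_Icc_self ht))) (right_mem_Icc.2 he.2.le)
  rw [Real.one_rpow] at hle
  exact hle.trans (mul_le_of_le_one_right (by positivity)
    (sub_le_self 1 (Real.rpow_nonneg he.1.le θ)))

end OneVariable

section Dilations

/-- The function `Φ` contracted towards the point `p` with ratio `t`, keeping its integral: if `Φ`
is the density of a random point `Z` of the plane, then `dilate p t Φ` is the density of
`p + t (Z - p)`. -/
def dilate (p : E2) (t : ℝ) (Φ : E2 → ℝ) (x : E2) : ℝ := (t ^ 2)⁻¹ * Φ (p + t⁻¹ • (x - p))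

lemma dilate_one (p : E2) (Φ : E2 → ℝ) : dilate p 1 Φ = Φ := by
  ext x
  simp [dilate]

lemma dilate_coord_sub_mul (p : E2) (t : ℝ) (Φ : E2 → ℝ) (i : Fin 2) (x : E2) :
    dilate p t (fun y => (y i - p i) * Φ y) x = t⁻¹ * (x i - p i) * dilate p t Φ x := by
  simp only [dilate, PiLp.add_apply, PiLp.smul_apply, PiLp.sub_apply, smul_eq_mul]
  ring

lemma exists_eq_of_dilate_ne_zero {p : E2} {t : ℝ} (ht : t ≠ 0) {Φ : E2 → ℝ} {x : E2}
    (hx : dilate p t Φ x ≠ 0) : ∃ z, Φ z ≠ 0 ∧ p + t • (z - p) = x := by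
  refine ⟨_, right_ne_zero_of_mul hx, ?_⟩
  rw [add_sub_cancel_left, smul_inv_smul₀ ht, add_sub_cancel]

lemma integral_dilate (p : E2) {t : ℝ} (ht : 0 < t) (Φ : E2 → ℝ) :
    ∫ x, dilate p t Φ x = ∫ x, Φ x := by
  have hsub : ∫ x, Φ (p + t⁻¹ • (x - p)) = ∫ x, Φ (p + t⁻¹ • x) :=
    integral_sub_right_eq_self (fun x => Φ (p + t⁻¹ • x)) p
  simp only [dilate]
  rw [integral_const_mul, hsub, Measure.integral_comp_inv_smul volume (fun x => Φ (p + x)) t,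
    integral_add_left_eq_self, finrank_euclideanSpace_fin, abs_of_nonneg (sq_nonneg t),
    smul_eq_mul, inv_mul_cancel_left₀ (pow_pos ht 2).ne']

variable {G : Set E2} {Φ : E2 → ℝ}

lemma IsTestFun.dilate (hG : IsOpen G) (hconv : Convex ℝ G) (hΦ : IsTestFun G Φ) {p : E2}
    (hp : p ∈ closure G) {t : ℝ} (ht : t ∈ Ioc (0 : ℝ) 1) : IsTestFun G (dilate p t Φ) := by
  obtain ⟨hsmooth, hcompact, hsupp⟩ := hΦ
  set K : Set E2 := (fun z => p + t • (z - p)) '' tsupport Φ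
  have hK : IsCompact K := hcompact.isCompact.image (by fun_prop)
  have hKG : K ⊆ G := by
    rintro _ ⟨z, hz, rfl⟩
    rw [← hG.interior_eq] at hsupp ⊢
    exact hconv.add_smul_sub_mem_interior' hp (hsupp hz) ht
  have hsuppK : Function.support (_root_.dilate p t Φ) ⊆ K := fun x hx => by
    obtain ⟨z, hz, rfl⟩ := exists_eq_of_dilate_ne_zero ht.1.ne' hx
    exact mem_image_of_mem _ (subset_tsupport _ hz)
  refine ⟨?_, HasCompactSupport.of_support_subset_isCompact hK hsuppK,
    (closure_minimal hsuppK hK.isClosed).trans hKG⟩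
  unfold _root_.dilate
  fun_prop

lemma IsTestFun.mul_left {φ : E2 → ℝ} (hφ : ContDiff ℝ (⊤ : ℕ∞) φ) (hΦ : IsTestFun G Φ) :
    IsTestFun G (fun x => φ x * Φ x) :=
  ⟨hφ.mul hΦ.1, hΦ.2.1.mul_left, (tsupport_mul_subset_right (f := φ)).trans hΦ.2.2⟩

lemma IsTestFun.eq_zero_of_notMem (hΦ : IsTestFun G Φ) {x : E2} (hx : x ∉ G) : Φ x = 0 :=
  image_eq_zero_of_notMem_tsupport fun h => hx (hΦ.2.2 h)

end Dilations

section TestDensities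

/-- Smooth probability densities compactly supported in `G`. -/
structure IsTestDensity (G : Set E2) (ρ : E2 → ℝ) : Prop where
  isTestFun : IsTestFun G ρ
  nonneg : ∀ x, 0 ≤ ρ x
  integral_eq_one : ∫ x, ρ x = 1

/-- `ρ` lives at scale `t` about the point `p`: it vanishes outside the ball of radius `r t`, and
its height is at most `b` times the inverse area of the square of side `t`. -/
structure IsConcentrated (b r : ℝ) (p : E2) (t : ℝ) (ρ : E2 → ℝ) : Prop where
  le : ∀ x, ρ x ≤ b / t ^ 2
  dist_le : ∀ x, ρ x ≠ 0 → dist x p ≤ r * t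

/-- The probability measure on `G` with density `ρ`. -/
def densityMeasure (G : Set E2) (ρ : E2 → ℝ) : Measure E2 :=
  (volume.restrict G).withDensity fun x => ENNReal.ofReal (ρ x)

variable {G : Set E2} {ρ : E2 → ℝ} {b r t : ℝ} {p : E2}

lemma exists_isTestDensity (hG : IsOpen G) (hne : G.Nonempty) : ∃ Φ, IsTestDensity G Φ := by
  obtain ⟨c, hc⟩ := hne
  obtain ⟨ε, hε, hball⟩ := nhds_basis_closedBall.mem_iff.1 (hG.mem_nhds hc)
  let bump : ContDiffBump c := ⟨ε / 2, ε, half_pos hε, half_lt_self hε⟩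
  exact ⟨bump.normed volume, ⟨bump.contDiff_normed, bump.hasCompactSupport_normed,
    by rwa [bump.tsupport_normed_eq]⟩, bump.nonneg_normed, bump.integral_normed⟩

lemma IsTestDensity.dilate (hG : IsOpen G) (hconv : Convex ℝ G) (hρ : IsTestDensity G ρ)
    (hp : p ∈ closure G) (ht : t ∈ Ioc (0 : ℝ) 1) : IsTestDensity G (dilate p t ρ) where
  isTestFun := hρ.isTestFun.dilate hG hconv hp ht
  nonneg x := mul_nonneg (by positivity) (hρ.nonneg _)
  integral_eq_one := (integral_dilate p ht.1 ρ).trans hρ.integral_eq_one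

lemma IsTestDensity.exists_le (hρ : IsTestDensity G ρ) : ∃ b, 0 < b ∧ ∀ x, ρ x ≤ b := by
  obtain ⟨b, hb⟩ := hρ.isTestFun.1.continuous.bounded_above_of_compact_support hρ.isTestFun.2.1
  exact ⟨b + 1, add_pos_of_nonneg_of_pos ((norm_nonneg _).trans (hb 0)) one_pos, fun x =>
    (le_abs_self _).trans ((hb x).trans (le_add_of_nonneg_right zero_le_one))⟩

lemma IsTestDensity.isConcentrated (hρ : IsTestDensity G ρ) (hb : ∀ x, ρ x ≤ b)
    (hr : ∀ x ∈ closure G, ∀ y ∈ closure G, dist x y ≤ r) (hp : p ∈ closure G) :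
    IsConcentrated b r p 1 ρ where
  le x := by simpa using hb x
  dist_le x hx := by
    rw [mul_one]
    exact hr x (subset_closure (not_imp_comm.1 hρ.isTestFun.eq_zero_of_notMem hx)) p hp

lemma IsConcentrated.dilate (hρ : IsConcentrated b r p t ρ) {s : ℝ} (hs : 0 < s) :
    IsConcentrated b r p (s * t) (dilate p s ρ) where
  le x := by
    calc (s ^ 2)⁻¹ * ρ (p + s⁻¹ • (x - p)) ≤ (s ^ 2)⁻¹ * (b / t ^ 2) := by gcongr; exact hρ.le _
      _ = b / (s * t) ^ 2 := by rw [mul_pow, div_mul_eq_div_div_swap]; field_simp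
  dist_le x hx := by
    obtain ⟨z, hz, rfl⟩ := exists_eq_of_dilate_ne_zero hs.ne' hx
    rw [dist_eq_norm, add_sub_cancel_left, norm_smul, Real.norm_of_nonneg hs.le, ← dist_eq_norm]
    nlinarith [hρ.dist_le z hz]

lemma IsConcentrated.recenter (hρ : IsConcentrated b r p t ρ) {q : E2} {d : ℝ}
    (hd : dist p q ≤ d * t) : IsConcentrated b (r + d) q t ρ where
  le := hρ.le
  dist_le x hx := by
    rw [add_mul]
    exact (dist_triangle x p q).trans (add_le_add (hρ.dist_le x hx) hd)

lemma IsTestDensity.isProbabilityMeasure (hρ : IsTestDensity G ρ) :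
    IsProbabilityMeasure (densityMeasure G ρ) := by
  have hint : Integrable ρ :=
    hρ.isTestFun.1.continuous.integrable_of_hasCompactSupport hρ.isTestFun.2.1
  refine ⟨?_⟩
  rw [densityMeasure, withDensity_apply _ MeasurableSet.univ, setLIntegral_univ,
    ← ofReal_integral_eq_lintegral_ofReal hint.integrableOn (Eventually.of_forall hρ.nonneg),
    setIntegral_eq_integral_of_forall_compl_eq_zero fun _ => hρ.isTestFun.eq_zero_of_notMem,
    hρ.integral_eq_one, ENNReal.ofReal_one]

lemma IsTestDensity.integral_densityMeasure (hρ : IsTestDensity G ρ) (f : E2 → ℝ) :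
    ∫ x, f x ∂densityMeasure G ρ = ∫ x in G, f x * ρ x := by
  rw [densityMeasure, integral_withDensity_eq_integral_toReal_smul
    hρ.isTestFun.1.continuous.measurable.ennreal_ofReal
    (Eventually.of_forall fun _ => ENNReal.ofReal_lt_top)]
  simp only [ENNReal.toReal_ofReal (hρ.nonneg _), smul_eq_mul, mul_comm]

lemma densityMeasure_le (hb : ∀ x, ρ x ≤ b) :
    densityMeasure G ρ ≤ ENNReal.ofReal b • volume.restrict G := by
  rw [densityMeasure, ← withDensity_const]
  exact withDensity_mono (Eventually.of_forall fun x => ENNReal.ofReal_le_ofReal (hb x))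

lemma IsTestDensity.ae_densityMeasure (hρ : IsTestDensity G ρ) {P : E2 → Prop}
    (hP : ∀ x, ρ x ≠ 0 → P x) : ∀ᵐ x ∂densityMeasure G ρ, P x := by
  rw [densityMeasure, ae_withDensity_iff hρ.isTestFun.1.continuous.measurable.ennreal_ofReal]
  refine Eventually.of_forall fun x hx => hP x fun h => hx ?_
  rw [h, ENNReal.ofReal_zero]

lemma integrable_densityMeasure (hb : ∀ x, ρ x ≤ b) {g : E2 → ℝ} (hg : IntegrableOn g G) :
    Integrable g (densityMeasure G ρ) :=
  (hg.smul_measure ENNReal.ofReal_ne_top).mono_measure (densityMeasure_le hb)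

end TestDensities

section GradientAverages

variable {G : Set E2} {g ρ ρ₁ ρ₂ Φ : E2 → ℝ} {θ b r s t : ℝ} {p : E2}

lemma integral_abs_sub_densityMeasure_le (hθ : 0 ≤ θ) (hb : 0 ≤ b) (hr : 0 ≤ r) (ht : 0 < t)
    (hts : t ≤ s) (hst : s ≤ 2 * t) (hρ₁ : IsTestDensity G ρ₁) (hρ₂ : IsTestDensity G ρ₂)
    (hc₁ : IsConcentrated b r p t ρ₁) (hc₂ : IsConcentrated b r p s ρ₂)
    (hg : IntegrableOn g G) (hgag : GagFin θ G g) :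
    ∫ q, |g q.1 - g q.2| ∂(densityMeasure G ρ₁).prod (densityMeasure G ρ₂) ≤
      b * (3 * r) ^ (1 + θ) * t ^ (-(1 - θ)) * √(gagSq θ G g) := by
  have := hρ₁.isProbabilityMeasure
  have := hρ₂.isProbabilityMeasure
  have hle₂ (x : E2) : ρ₂ x ≤ b / t ^ 2 := (hc₂.le x).trans (by gcongr)
  have hdist : ∀ᵐ q ∂(densityMeasure G ρ₁).prod (densityMeasure G ρ₂),
      dist q.1 q.2 ≤ 3 * r * t := by
    filter_upwards [Measure.quasiMeasurePreserving_fst.ae (hρ₁.ae_densityMeasure hc₁.dist_le),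
      Measure.quasiMeasurePreserving_snd.ae (hρ₂.ae_densityMeasure hc₂.dist_le)] with q h₁ h₂
    calc dist q.1 q.2 ≤ r * t + r * s :=
          (dist_triangle_right _ _ p).trans (add_le_add h₁ h₂)
      _ ≤ 3 * r * t := by nlinarith
  have hint : Integrable (fun q : E2 × E2 => (g q.1 - g q.2) ^ 2 / dist q.1 q.2 ^ (2 * (1 + θ)))
      ((volume.restrict G).prod (volume.restrict G)) := by
    simpa only [GagFin, mul_add, mul_one] using hgag
  have hpow : b / t ^ 2 * (3 * r * t) ^ (1 + θ) = b * (3 * r) ^ (1 + θ) * t ^ (-(1 - θ)) := by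
    rw [Real.mul_rpow (by positivity) ht.le, show -(1 - θ) = 1 + θ - 2 by ring,
      Real.rpow_sub ht, Real.rpow_two]
    ring
  calc _ ≤ b / t ^ 2 * (3 * r * t) ^ (1 + θ) * √(∫ q, (g q.1 - g q.2) ^ 2 /
        dist q.1 q.2 ^ (2 * (1 + θ)) ∂(volume.restrict G).prod (volume.restrict G)) :=
        integral_abs_sub_le_sqrt_gagliardo (by positivity) (by positivity) (by positivity)
          (densityMeasure_le hc₁.le) (densityMeasure_le hle₂) hdist hg.aestronglyMeasurable hint
    _ = _ := by rw [hpow, integral_prod _ hint, gagSq, mul_add, mul_one]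

lemma integral_abs_le_add_abs_integral_of_isConcentrated (hθ : 0 ≤ θ) (hb : 0 ≤ b) (hr : 0 ≤ r)
    (ht : 0 < t) (hts : t ≤ s) (hst : s ≤ 2 * t) (hρ₁ : IsTestDensity G ρ₁)
    (hρ₂ : IsTestDensity G ρ₂) (hc₁ : IsConcentrated b r p t ρ₁)
    (hc₂ : IsConcentrated b r p s ρ₂) (hg : IntegrableOn g G) (hgag : GagFin θ G g) :
    ∫ x in G, |g x| * ρ₁ x ≤ b * (3 * r) ^ (1 + θ) * √(gagSq θ G g) * t ^ (-(1 - θ)) +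
      |∫ x in G, g x * ρ₂ x| := by
  have := hρ₁.isProbabilityMeasure
  have := hρ₂.isProbabilityMeasure
  rw [← hρ₁.integral_densityMeasure, ← hρ₂.integral_densityMeasure, mul_right_comm]
  exact (integral_abs_le_integral_abs_sub_add (integrable_densityMeasure hc₁.le hg)
    (integrable_densityMeasure hc₂.le hg)).trans <| add_le_add_left
      (integral_abs_sub_densityMeasure_le hθ hb hr ht hts hst hρ₁ hρ₂ hc₁ hc₂ hg hgag) _

lemma IsTestDensity.abs_integral_mul_le (hρ : IsTestDensity G ρ) :
    |∫ x in G, g x * ρ x| ≤ ∫ x in G, |g x| * ρ x := by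
  simpa only [abs_mul, abs_of_nonneg (hρ.nonneg _)] using
    abs_integral_le_integral_abs (f := fun x => g x * ρ x) (μ := volume.restrict G)

lemma abs_integral_mul_dilate_le (hG : IsOpen G) (hconv : Convex ℝ G) (hp : p ∈ closure G)
    (hθ : 0 ≤ θ) (hθ1 : θ < 1) (hb : 0 ≤ b) (hr : 0 ≤ r) (hΦ : IsTestDensity G Φ)
    (hc : IsConcentrated b r p 1 Φ) (hg : IntegrableOn g G) (hgag : GagFin θ G g)
    (hmean : ∫ x in G, g x * Φ x = 0) (ht : t ∈ Ioc (0 : ℝ) 1) :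
    |∫ x in G, g x * dilate p t Φ x| ≤
      b * (3 * r) ^ (1 + θ) * √(gagSq θ G g) / (1 - 2 ^ (-(1 - θ))) * t ^ (-(1 - θ)) := by
  have hdens {t : ℝ} (ht : t ∈ Ioc (0 : ℝ) 1) : IsTestDensity G (dilate p t Φ) :=
    hΦ.dilate hG hconv hp ht
  have hconc {t : ℝ} (ht : 0 < t) : IsConcentrated b r p t (dilate p t Φ) := by
    simpa only [mul_one] using hc.dilate ht
  refine le_rpow_of_dyadic_le (m := fun t => |∫ x in G, g x * dilate p t Φ x|) (by positivity)
    (sub_pos.2 hθ1) (by rw [dilate_one, hmean, abs_zero]) ?_ ht.1 ht.2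
  intro t s ht hts hst hs
  have hρ := hdens ⟨ht, hts.trans hs⟩
  exact hρ.abs_integral_mul_le.trans <|
    integral_abs_le_add_abs_integral_of_isConcentrated hθ hb hr ht hts hst hρ
      (hdens ⟨ht.trans_le hts, hs⟩) (hconc ht) (hconc (ht.trans_le hts)) hg hgag

lemma integral_abs_mul_le_of_isConcentrated (hG : IsOpen G) (hconv : Convex ℝ G)
    (hp : p ∈ closure G) (hθ : 0 ≤ θ) (hθ1 : θ < 1) (hb : 0 ≤ b) (hr : 0 ≤ r)
    (hΦ : IsTestDensity G Φ) (hΦc : IsConcentrated b r p 1 Φ) (hg : IntegrableOn g G)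
    (hgag : GagFin θ G g) (hmean : ∫ x in G, g x * Φ x = 0) (hρ : IsTestDensity G ρ)
    (ht : t ∈ Ioc (0 : ℝ) 1) (hρc : IsConcentrated b r p t ρ) :
    ∫ x in G, |g x| * ρ x ≤ b * (3 * r) ^ (1 + θ) * (1 + (1 - 2 ^ (-(1 - θ)))⁻¹) *
      √(gagSq θ G g) * t ^ (-(1 - θ)) := by
  have hΦt : IsConcentrated b r p t (dilate p t Φ) := by simpa only [mul_one] using hΦc.dilate ht.1
  have hosc := integral_abs_le_add_abs_integral_of_isConcentrated hθ hb hr ht.1 le_rfl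
    (by linarith [ht.1]) hρ (hΦ.dilate hG hconv hp ht) hρc hΦt hg hgag
  have hdilate := abs_integral_mul_dilate_le hG hconv hp hθ hθ1 hb hr hΦ hΦc hg hgag hmean ht
  calc _ ≤ _ := hosc.trans (add_le_add_right hdilate _)
    _ = _ := by ring

end GradientAverages

section Derivative

/-- The divergence of the radial vector field `y ↦ Φ y • (y - p)`; it generates the dilations of
`Φ` about `p`. -/
def radialDiv (p : E2) (Φ : E2 → ℝ) (x : E2) : ℝ := ∑ i, pd i (fun y => (y i - p i) * Φ y) x

variable {G : Set E2} {f ρ Φ : E2 → ℝ} {g : Fin 2 → E2 → ℝ} {b r t : ℝ} {p : E2}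

lemma radialDiv_eq (hΦ : Differentiable ℝ Φ) (p x : E2) :
    radialDiv p Φ x = 2 * Φ x + fderiv ℝ Φ x (x - p) := by
  have hpd (i : Fin 2) : pd i (fun y => (y i - p i) * Φ y) x =
      Φ x + (x i - p i) * fderiv ℝ Φ x (EuclideanSpace.single i 1) := by
    have hcoord : HasFDerivAt (fun y : E2 => y i - p i)
        (EuclideanSpace.proj i : E2 →L[ℝ] ℝ) x :=
      (EuclideanSpace.proj i : E2 →L[ℝ] ℝ).hasFDerivAt.sub_const _
    have hmul : HasFDerivAt (fun y => (y i - p i) * Φ y) _ x := hcoord.mul (hΦ x).hasFDerivAt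
    rw [pd, hmul.fderiv]
    simp [add_comm]
  have hsum : x - p = ∑ i, (x i - p i) • (EuclideanSpace.single i 1 : E2) := by
    ext i
    fin_cases i <;> simp
  rw [radialDiv, hsum, map_sum, Fin.sum_univ_two, Fin.sum_univ_two, hpd, hpd]
  simp only [map_smul, smul_eq_mul]
  ring

lemma hasDerivAt_dilate (hΦ : Differentiable ℝ Φ) (p x : E2) (ht : t ≠ 0) :
    HasDerivAt (fun s => dilate p s Φ x) (-t⁻¹ * dilate p t (radialDiv p Φ) x) t := by
  have hpoint : HasDerivAt (fun s : ℝ => p + s⁻¹ • (x - p)) (-(t ^ 2)⁻¹ • (x - p)) t :=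
    ((hasDerivAt_inv ht).smul_const (x - p)).const_add p
  have hinv : HasDerivAt (fun s : ℝ => (s ^ 2)⁻¹) (-(2 * t) / (t ^ 2) ^ 2) t := by
    simpa using (hasDerivAt_pow 2 t).fun_inv (pow_ne_zero 2 ht)
  refine (hinv.mul ((hΦ _).hasFDerivAt.comp_hasDerivAt t hpoint)).congr_deriv ?_
  rw [dilate, radialDiv_eq hΦ, add_sub_cancel_left, map_smul, map_smul]
  simp only [smul_eq_mul, Function.comp_apply]
  field_simp
  ring

lemma pd_dilate (hΦ : Differentiable ℝ Φ) (p : E2) (t : ℝ) (i : Fin 2) (x : E2) :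
    pd i (dilate p t Φ) x = t⁻¹ * dilate p t (pd i Φ) x := by
  have hpoint : HasFDerivAt (fun y : E2 => p + t⁻¹ • (y - p))
      (t⁻¹ • ContinuousLinearMap.id ℝ E2) x :=
    (((hasFDerivAt_id x).sub_const p).const_smul t⁻¹).const_add p
  have hdilate := ((hΦ (p + t⁻¹ • (x - p))).hasFDerivAt.comp x hpoint).const_mul (t ^ 2)⁻¹
  rw [pd, show dilate p t Φ = fun y => (t ^ 2)⁻¹ * (Φ ∘ fun y => p + t⁻¹ • (y - p)) y from rfl,
    hdilate.fderiv]
  simp only [dilate, pd, smul_apply, ContinuousLinearMap.comp_apply,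
    ContinuousLinearMap.id_apply, map_smul, smul_eq_mul]
  ring

lemma inv_mul_dilate_radialDiv (hΦ : ContDiff ℝ (⊤ : ℕ∞) Φ) (p : E2) (t : ℝ) (x : E2) :
    t⁻¹ * dilate p t (radialDiv p Φ) x =
      ∑ i, pd i (dilate p t fun y => (y i - p i) * Φ y) x := by
  have hdiff (i : Fin 2) : Differentiable ℝ fun y : E2 => (y i - p i) * Φ y := by
    have := hΦ.differentiable (by simp)
    fun_prop
  simp only [pd_dilate (hdiff _), ← Finset.mul_sum]
  simp only [dilate, radialDiv, Finset.mul_sum]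

lemma IsTestFun.coord_sub_mul (hρ : IsTestFun G ρ) (p : E2) (i : Fin 2) :
    IsTestFun G fun y => (y i - p i) * ρ y :=
  hρ.mul_left (by fun_prop)

lemma IsTestFun.continuous_pd (hρ : IsTestFun G ρ) (i : Fin 2) : Continuous (pd i ρ) :=
  (hρ.1.continuous_fderiv (by simp)).clm_apply continuous_const

lemma IsTestFun.hasCompactSupport_pd (hρ : IsTestFun G ρ) (i : Fin 2) :
    HasCompactSupport (pd i ρ) :=
  hρ.2.1.fderiv_apply ℝ _

lemma IsTestFun.continuous_radialDiv (hρ : IsTestFun G ρ) (p : E2) :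
    Continuous (radialDiv p ρ) :=
  continuous_finsetSum _ fun i _ => (hρ.coord_sub_mul p i).continuous_pd i

lemma IsTestFun.exists_abs_radialDiv_le (hρ : IsTestFun G ρ) (p : E2) :
    ∃ M, ∀ x, |radialDiv p ρ x| ≤ M := by
  choose M hM using fun i =>
    ((hρ.coord_sub_mul p i).continuous_pd i).bounded_above_of_compact_support
      ((hρ.coord_sub_mul p i).hasCompactSupport_pd i)
  exact ⟨∑ i, M i, fun x => (Finset.abs_sum_le_sum_abs _ _).trans
    (Finset.sum_le_sum fun i _ => hM i x)⟩

lemma integrableOn_mul_of_hasCompactSupport {φ : E2 → ℝ} (hf : IntegrableOn f G)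
    (hφ : Continuous φ) (hcs : HasCompactSupport φ) : IntegrableOn (fun x => f x * φ x) G := by
  obtain ⟨M, hM⟩ := hφ.bounded_above_of_compact_support hcs
  exact hf.mul_bdd hφ.aestronglyMeasurable (Eventually.of_forall hM)

lemma continuous_dilate (hΦ : Continuous Φ) (p : E2) (t : ℝ) : Continuous (dilate p t Φ) := by
  unfold dilate
  fun_prop

lemma hasDerivAt_integral_mul_dilate (hρ : IsTestFun G ρ) (hf : IntegrableOn f G)
    (p : E2) (ht : 0 < t) :
    HasDerivAt (fun s => ∫ x in G, f x * dilate p s ρ x)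
      (∫ x in G, f x * (-t⁻¹ * dilate p t (radialDiv p ρ) x)) t := by
  obtain ⟨M, hM⟩ := hρ.exists_abs_radialDiv_le p
  obtain ⟨B, hB⟩ := hρ.1.continuous.bounded_above_of_compact_support hρ.2.1
  have : 0 ≤ M := (abs_nonneg _).trans (hM 0)
  have hmeas (s : ℝ) : AEStronglyMeasurable (dilate p s ρ) (volume.restrict G) :=
    (continuous_dilate hρ.1.continuous p s).aestronglyMeasurable
  have hint : IntegrableOn (fun x => f x * dilate p t ρ x) G :=
    hf.mul_bdd (c := (t ^ 2)⁻¹ * B) (hmeas t) <| Eventually.of_forall fun x => by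
      rw [dilate, norm_mul, Real.norm_of_nonneg (by positivity)]
      gcongr
      exact hB _
  have hbound (x : E2) (s : ℝ) (hs : s ∈ Ioi (t / 2)) :
      ‖f x * (-s⁻¹ * dilate p s (radialDiv p ρ) x)‖ ≤
        ‖f x‖ * ((t / 2)⁻¹ * (((t / 2) ^ 2)⁻¹ * M)) := by
    have ht2 : 0 < t / 2 := half_pos ht
    have hs0 : 0 < s := ht2.trans hs
    rw [dilate, norm_mul, norm_mul, norm_mul, norm_neg, norm_inv, norm_inv, norm_pow,
      Real.norm_of_nonneg hs0.le]
    gcongr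
    exacts [hs.le, hs.le, hM _]
  exact (hasDerivAt_integral_of_dominated_loc_of_deriv_le (Ioi_mem_nhds (half_lt_self ht))
    (Eventually.of_forall fun s => hf.aestronglyMeasurable.mul (hmeas s)) hint
    (hf.aestronglyMeasurable.mul
      ((continuous_dilate (hρ.continuous_radialDiv p) p t).aestronglyMeasurable.const_mul _))
    (Eventually.of_forall hbound) (hf.norm.mul_const _) <| Eventually.of_forall fun x s hs =>
      (hasDerivAt_dilate (hρ.1.differentiable (by simp)) p x
        ((half_pos ht).trans hs).ne').const_mul (f x)).2

lemma hasDerivAt_integral_mul_dilate_of_hasWeakPD (hG : IsOpen G) (hconv : Convex ℝ G)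
    (hρ : IsTestFun G ρ) (hf : IntegrableOn f G) (hfg : ∀ i, HasWeakPD G i f (g i))
    (hp : p ∈ closure G) (ht : t ∈ Ioc (0 : ℝ) 1) :
    HasDerivAt (fun s => ∫ x in G, f x * dilate p s ρ x)
      (∑ i, ∫ x in G, g i x * (t⁻¹ * (x i - p i) * dilate p t ρ x)) t := by
  have htest (i : Fin 2) : IsTestFun G (dilate p t fun y => (y i - p i) * ρ y) :=
    (hρ.coord_sub_mul p i).dilate hG hconv hp ht
  refine (hasDerivAt_integral_mul_dilate hρ hf p ht.1).congr_deriv ?_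
  calc ∫ x in G, f x * (-t⁻¹ * dilate p t (radialDiv p ρ) x)
      = -∫ x in G, ∑ i, f x * pd i (dilate p t fun y => (y i - p i) * ρ y) x := by
        rw [← integral_neg]
        refine integral_congr_ae (Eventually.of_forall fun x => ?_)
        simp only [neg_mul, inv_mul_dilate_radialDiv hρ.1, Finset.mul_sum, mul_neg]
    _ = ∑ i, -∫ x in G, f x * pd i (dilate p t fun y => (y i - p i) * ρ y) x := by
        rw [integral_finsetSum _ fun i _ => integrableOn_mul_of_hasCompactSupport hf
          ((htest i).continuous_pd i) ((htest i).hasCompactSupport_pd i), Finset.sum_neg_distrib]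
    _ = _ := by
        simp only [hfg _ _ (htest _), neg_neg, dilate_coord_sub_mul]

lemma tendsto_integral_mul_dilate (hG : IsOpen G) (hconv : Convex ℝ G) (hp : p ∈ closure G)
    (hρ : IsTestDensity G ρ) (hc : IsConcentrated b r p t ρ) (hf : IntegrableOn f G)
    (hcont : ContinuousWithinAt f G p) :
    Tendsto (fun s => ∫ x in G, f x * dilate p s ρ x) (𝓝[>] 0) (𝓝 (f p)) := by
  refine Metric.tendsto_nhds.2 fun ε hε => ?_
  obtain ⟨δ, hδ, hfδ⟩ := Metric.continuousWithinAt_iff.1 hcont (ε / 2) (half_pos hε)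
  have hlim : Tendsto (fun s => r * (s * t)) (𝓝[>] 0) (𝓝 0) := by
    refine tendsto_nhdsWithin_of_tendsto_nhds ?_
    simpa using ((continuous_mul_const t).const_mul r).tendsto 0
  filter_upwards [hlim.eventually_lt_const hδ, Ioc_mem_nhdsGT one_pos] with s hs hs01
  have hρs := hρ.dilate hG hconv hp hs01
  have hcs := hc.dilate hs01.1
  have := hρs.isProbabilityMeasure
  have hclose : ∀ᵐ x ∂densityMeasure G (dilate p s ρ), ‖f x - f p‖ ≤ ε / 2 :=
    hρs.ae_densityMeasure fun x hx => by
      refine (hfδ (not_imp_comm.1 hρs.isTestFun.eq_zero_of_notMem hx) ?_).le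
      exact (hcs.dist_le x hx).trans_lt hs
  calc dist (∫ x in G, f x * dilate p s ρ x) (f p)
      = ‖∫ x, (f x - f p) ∂densityMeasure G (dilate p s ρ)‖ := by
        rw [integral_sub (integrable_densityMeasure hcs.le hf) (integrable_const _),
          hρs.integral_densityMeasure, integral_const, probReal_univ, one_smul, dist_eq_norm]
    _ ≤ ε / 2 := by simpa using norm_integral_le_of_norm_le_const hclose
    _ < ε := half_lt_self hε

end Derivative

section MeanZero

/-- `g` is the weak gradient of `f` on `G`, with components in `L¹` of finite Gagliardo seminorm of
order `θ`. -/
structure HasGagliardoGradient (θ : ℝ) (G : Set E2) (f : E2 → ℝ) (g : Fin 2 → E2 → ℝ) : Prop where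
  hasWeakPD : ∀ i, HasWeakPD G i f (g i)
  integrableOn : ∀ i, IntegrableOn (g i) G
  gagFin : ∀ i, GagFin θ G (g i)

/-- The seminorm `|f|_{1+θ,G}` of a function `f` with weak gradient `g`. -/
def gradSeminorm (θ : ℝ) (G : Set E2) (g : Fin 2 → E2 → ℝ) : ℝ := √(∑ i, gagSq θ G (g i))

lemma sqrt_gagSq_le_gradSeminorm (θ : ℝ) (G : Set E2) (g : Fin 2 → E2 → ℝ) (i : Fin 2) :
    √(gagSq θ G (g i)) ≤ gradSeminorm θ G g := by
  have hnonneg (j : Fin 2) : 0 ≤ gagSq θ G (g j) :=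
    integral_nonneg fun x => integral_nonneg fun y => by positivity
  exact Real.sqrt_le_sqrt (Finset.single_le_sum (fun j _ => hnonneg j) (Finset.mem_univ i))

variable {G : Set E2} {f u ρ Φ : E2 → ℝ} {g : Fin 2 → E2 → ℝ} {θ b r K s t : ℝ} {p : E2}

lemma abs_integral_velocity_mul_le (hρ : IsTestDensity G ρ) (hs : 0 < s)
    (hc : IsConcentrated b r p (s * t) ρ) (hu : IntegrableOn u G) (i : Fin 2) :
    |∫ x in G, u x * (s⁻¹ * (x i - p i) * ρ x)| ≤ r * t * ∫ x in G, |u x| * ρ x := by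
  have hvel (x : E2) (hx : ρ x ≠ 0) : |s⁻¹ * (x i - p i)| ≤ r * t := by
    have hcoord : |x i - p i| ≤ dist x p := by
      simpa [dist_eq_norm] using PiLp.norm_apply_le (x - p) i
    calc |s⁻¹ * (x i - p i)| = s⁻¹ * |x i - p i| := by rw [abs_mul, abs_of_pos (inv_pos.2 hs)]
      _ ≤ s⁻¹ * (r * (s * t)) := by gcongr; exact hcoord.trans (hc.dist_le x hx)
      _ = r * t := by field_simp
  have hle (x : E2) : ‖u x * (s⁻¹ * (x i - p i) * ρ x)‖ ≤ r * t * (|u x| * ρ x) := by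
    rcases eq_or_ne (ρ x) 0 with hx | hx
    · simp [hx]
    · rw [norm_mul, norm_mul, Real.norm_of_nonneg (hρ.nonneg x), Real.norm_eq_abs,
        Real.norm_eq_abs, mul_left_comm]
      exact mul_le_mul_of_nonneg_right (hvel x hx) (mul_nonneg (abs_nonneg _) (hρ.nonneg x))
  rw [← integral_const_mul]
  exact norm_integral_le_of_norm_le ((integrableOn_mul_of_hasCompactSupport hu.abs
    hρ.isTestFun.1.continuous hρ.isTestFun.2.1).const_mul _) (Eventually.of_forall hle)

lemma abs_integral_mul_sub_le_of_isConcentrated (hG : IsOpen G) (hconv : Convex ℝ G)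
    (hp : p ∈ closure G) (hθ : 0 < θ) (hr : 0 ≤ r) (ht : 0 < t) (hK : 0 ≤ K)
    (hρ : IsTestDensity G ρ) (hc : IsConcentrated b r p t ρ) (hf : IntegrableOn f G)
    (hcont : ContinuousWithinAt f G p) (hfg : ∀ i, HasWeakPD G i f (g i))
    (hg : ∀ i, IntegrableOn (g i) G)
    (hgK : ∀ i, ∀ s ∈ Ioc (0 : ℝ) 1,
      ∫ x in G, |g i x| * dilate p s ρ x ≤ K * (s * t) ^ (-(1 - θ))) :
    |(∫ x in G, f x * ρ x) - f p| ≤ 2 * (r * K * t ^ θ) / θ := by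
  have hderiv (s : ℝ) (hs : s ∈ Ioc (0 : ℝ) 1) :=
    hasDerivAt_integral_mul_dilate_of_hasWeakPD hG hconv hρ.isTestFun hf hfg hp hs
  have hbound (s : ℝ) (hs : s ∈ Ioc (0 : ℝ) 1) :
      |∑ i, ∫ x in G, g i x * (s⁻¹ * (x i - p i) * dilate p s ρ x)| ≤
        2 * (r * K * t ^ θ) * s ^ (θ - 1) := by
    have hpow : t * (s * t) ^ (-(1 - θ)) = t ^ θ * s ^ (θ - 1) := by
      rw [neg_sub, Real.mul_rpow hs.1.le ht.le, Real.rpow_sub_one ht.ne']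
      field_simp
    calc _ ≤ ∑ _i : Fin 2, r * t * (K * (s * t) ^ (-(1 - θ))) :=
          (Finset.abs_sum_le_sum_abs _ _).trans <| Finset.sum_le_sum fun i _ =>
            (abs_integral_velocity_mul_le (hρ.dilate hG hconv hp hs) hs.1 (hc.dilate hs.1)
              (hg i) i).trans (mul_le_mul_of_nonneg_left (hgK i s hs) (by positivity))
      _ = 2 * (r * K * (t * (s * t) ^ (-(1 - θ)))) := by rw [Fin.sum_univ_two]; ring
      _ = _ := by rw [hpow]; ring
  simpa only [dilate_one] using abs_sub_le_of_abs_deriv_le_rpow hθ (by positivity) hderiv hbound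
    (tendsto_integral_mul_dilate hG hconv hp hρ hc hf hcont)

lemma abs_integral_mul_sub_le_of_mean_zero (hG : IsOpen G) (hconv : Convex ℝ G)
    (hp : p ∈ closure G) (hθ : 0 < θ) (hθ1 : θ < 1) (hb : 0 ≤ b) (hr : 0 ≤ r)
    (hΦ : IsTestDensity G Φ) (hΦc : IsConcentrated b r p 1 Φ) (ht : t ∈ Ioc (0 : ℝ) 1)
    (hρ : IsTestDensity G ρ) (hρc : IsConcentrated b r p t ρ) (hf : IntegrableOn f G)
    (hcont : ContinuousWithinAt f G p) (hfg : HasGagliardoGradient θ G f g)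
    (hmean : ∀ i, ∫ x in G, g i x * Φ x = 0) :
    |(∫ x in G, f x * ρ x) - f p| ≤ 2 * (r * (b * (3 * r) ^ (1 + θ) *
      (1 + (1 - 2 ^ (-(1 - θ)))⁻¹) * gradSeminorm θ G g) * t ^ θ) / θ := by
  have hq : 0 < 1 - (2 : ℝ) ^ (-(1 - θ)) :=
    sub_pos.2 (Real.rpow_lt_one_of_one_lt_of_neg one_lt_two (neg_lt_zero.2 (sub_pos.2 hθ1)))
  have hseminorm : 0 ≤ gradSeminorm θ G g := Real.sqrt_nonneg _
  refine abs_integral_mul_sub_le_of_isConcentrated hG hconv hp hθ hr ht.1 (by positivity) hρ hρc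
    hf hcont hfg.hasWeakPD hfg.integrableOn fun i s hs => ?_
  have hst : s * t ∈ Ioc (0 : ℝ) 1 := ⟨mul_pos hs.1 ht.1, mul_le_one₀ hs.2 ht.1.le ht.2⟩
  refine (integral_abs_mul_le_of_isConcentrated hG hconv hp hθ.le hθ1 hb hr hΦ hΦc
    (hfg.integrableOn i) (hfg.gagFin i) (hmean i) (hρ.dilate hG hconv hp hs) hst
    (hρc.dilate hs.1)).trans ?_
  have hpow : 0 ≤ (s * t) ^ (-(1 - θ)) := Real.rpow_nonneg hst.1.le _
  gcongr
  exact sqrt_gagSq_le_gradSeminorm θ G g i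

lemma exists_abs_sub_le_of_mean_zero (hG : IsOpen G) (hconv : Convex ℝ G)
    (hbdd : Bornology.IsBounded G) (hθ : 0 < θ) (hθ1 : θ < 1) (hΦ : IsTestDensity G Φ) :
    ∃ C, 0 < C ∧ ∀ (f : E2 → ℝ) (g : Fin 2 → E2 → ℝ), HasGagliardoGradient θ G f g →
      ContinuousOn f (closure G) → (∀ i, ∫ x in G, g i x * Φ x = 0) →
      ∀ x ∈ closure G, ∀ y ∈ closure G,
        |f x - f y| ≤ C * dist x y ^ θ * gradSeminorm θ G g := by
  obtain ⟨b, hb, hΦb⟩ := hΦ.exists_le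
  obtain ⟨D, hD, hdist⟩ : ∃ D, 0 < D ∧ ∀ x ∈ closure G, ∀ y ∈ closure G, dist x y ≤ D :=
    ⟨diam (closure G) + 1, by positivity, fun x hx y hy =>
      (dist_le_diam_of_mem hbdd.closure hx hy).trans (le_add_of_nonneg_right zero_le_one)⟩
  have hq : 0 < 1 - (2 : ℝ) ^ (-(1 - θ)) :=
    sub_pos.2 (Real.rpow_lt_one_of_one_lt_of_neg one_lt_two (neg_lt_zero.2 (sub_pos.2 hθ1)))
  set K : ℝ := 2 * ((D + D) * (b * (3 * (D + D)) ^ (1 + θ) * (1 + (1 - 2 ^ (-(1 - θ)))⁻¹))) / θ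
  refine ⟨2 * K / D ^ θ, by positivity, fun f g hfg hcont hmean x hx y hy => ?_⟩
  rcases eq_or_ne x y with rfl | hxy
  · simp [Real.zero_rpow hθ.ne']
  have hf : IntegrableOn f G :=
    (hcont.integrableOn_compact hbdd.isCompact_closure).mono_set subset_closure
  set h : ℝ := dist x y / D
  have hDh : D * h = dist x y := mul_div_cancel₀ _ hD.ne'
  have hh : h ∈ Ioc (0 : ℝ) 1 :=
    ⟨div_pos (dist_pos.2 hxy) hD, (div_le_one hD).2 (hdist x hx y hy)⟩
  have hρ := hΦ.dilate hG hconv hy hh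
  have hρy : IsConcentrated b D y h (dilate y h Φ) := by
    simpa only [mul_one] using (hΦ.isConcentrated hΦb hdist hy).dilate hh.1
  have hmeanval (z : E2) (hz : z ∈ closure G) (hyz : dist y z ≤ D * h) :
      |(∫ u in G, f u * dilate y h Φ u) - f z| ≤ K * h ^ θ * gradSeminorm θ G g := by
    have hΦz : IsConcentrated b (D + D) z 1 Φ :=
      hΦ.isConcentrated hΦb (fun u hu v hv => by linarith [hdist u hu v hv]) hz
    refine (abs_integral_mul_sub_le_of_mean_zero hG hconv hz hθ hθ1 hb.le (by positivity) hΦ hΦz hh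
      hρ (hρy.recenter hyz) hf ((hcont z hz).mono subset_closure) hfg hmean).trans_eq ?_
    simp only [K]
    ring
  have hx' := hmeanval x hx (by rw [hDh, dist_comm])
  have hy' := hmeanval y hy (by rw [dist_self]; exact mul_nonneg hD.le hh.1.le)
  calc |f x - f y| ≤ 2 * (K * h ^ θ * gradSeminorm θ G g) := by
        rw [abs_sub_comm] at hx'
        linarith [abs_sub_le (f x) (∫ u in G, f u * dilate y h Φ u) (f y)]
    _ = _ := by rw [Real.div_rpow dist_nonneg hD.le]; ring

end MeanZero

section AffineCorrection

lemma exists_opNorm_le_of_vectorSpan_eq_top {E : Type*} [NormedAddCommGroup E] [NormedSpace ℝ E]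
    [FiniteDimensional ℝ E] {V : Set E} (hV : vectorSpan ℝ V = ⊤) :
    ∃ c > (0 : ℝ), ∀ (L : E →L[ℝ] ℝ) (M : ℝ), 0 ≤ M →
      (∀ u ∈ V, ∀ v ∈ V, |L u - L v| ≤ M) → ‖L‖ ≤ c * M := by
  let basis := Module.Basis.ofSpan (K := ℝ) (s := V -ᵥ V) hV.ge
  obtain ⟨c, hc, hnorm⟩ := basis.exists_opNorm_le (F := ℝ)
  refine ⟨c, hc, fun L M hM hL => hnorm hM fun i => ?_⟩
  obtain ⟨u, hu, v, hv, huv⟩ := Module.Basis.ofSpan_subset hV.ge (mem_range_self i)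
  rw [← huv]
  simpa only [vsub_eq_sub, map_sub, Real.norm_eq_abs] using hL u hu v hv

lemma exists_abs_sub_le_of_abs_sub_sub_clm_le {E : Type*} [NormedAddCommGroup E]
    [NormedSpace ℝ E] [FiniteDimensional ℝ E] {S V : Set E} {θ : ℝ}
    (hS : Bornology.IsBounded S) (hV : V ⊆ S) (hspan : affineSpan ℝ V = ⊤) (hθ : 0 ≤ θ)
    (hθ1 : θ ≤ 1) :
    ∃ C : ℝ, 0 < C ∧ ∀ (f : E → ℝ) (L : E →L[ℝ] ℝ) (A : ℝ), 0 ≤ A → (∀ v ∈ V, f v = 0) →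
      (∀ x ∈ S, ∀ y ∈ S, |(f x - f y) - (L x - L y)| ≤ A * dist x y ^ θ) →
      ∀ x ∈ S, ∀ y ∈ S, |f x - f y| ≤ C * (A * dist x y ^ θ) := by
  obtain ⟨c, hc, hnorm⟩ := exists_opNorm_le_of_vectorSpan_eq_top
    (AffineSubspace.vectorSpan_eq_top_of_affineSpan_eq_top ℝ E E hspan)
  set D : ℝ := diam S
  refine ⟨1 + c * D ^ θ * D ^ (1 - θ), by positivity, fun f L A hA hfV hfL x hx y hy => ?_⟩
  have hL : ‖L‖ ≤ c * (A * D ^ θ) := by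
    refine hnorm L _ (by positivity) fun u hu v hv => ?_
    calc |L u - L v| = |(f u - f v) - (L u - L v)| := by
          rw [hfV u hu, hfV v hv, sub_self, zero_sub, abs_neg]
      _ ≤ A * dist u v ^ θ := hfL u (hV hu) v (hV hv)
      _ ≤ A * D ^ θ := by gcongr; exact dist_le_diam_of_mem hS (hV hu) (hV hv)
  have hdist : dist x y ≤ D ^ (1 - θ) * dist x y ^ θ := by
    calc dist x y = dist x y ^ (1 - θ) * dist x y ^ θ := by
          rw [← Real.rpow_add_of_nonneg dist_nonneg (sub_nonneg.2 hθ1) hθ, sub_add_cancel,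
            Real.rpow_one]
      _ ≤ _ := by
          gcongr
          exact dist_le_diam_of_mem hS hx hy
  have hop : |L x - L y| ≤ ‖L‖ * dist x y := by
    simpa only [map_sub, dist_eq_norm, Real.norm_eq_abs] using L.le_opNorm (x - y)
  calc |f x - f y| ≤ |(f x - f y) - (L x - L y)| + |L x - L y| := by
        simpa only [sub_add_cancel] using abs_add_le ((f x - f y) - (L x - L y)) (L x - L y)
    _ ≤ A * dist x y ^ θ + ‖L‖ * dist x y := add_le_add (hfL x hx y hy) hop
    _ ≤ A * dist x y ^ θ + c * (A * D ^ θ) * (D ^ (1 - θ) * dist x y ^ θ) := by gcongr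
    _ = _ := by ring

variable {G : Set E2} {f f₁ f₂ u₁ u₂ : E2 → ℝ} {g : Fin 2 → E2 → ℝ} {θ : ℝ} {i : Fin 2}

lemma hasWeakPD_of_contDiff (hf : ContDiff ℝ 1 f) : HasWeakPD G i f (pd i f) := by
  intro φ hφ
  have hφ_cont := hφ.1.continuous
  have hpdφ_zero (x : E2) (hx : x ∉ G) : pd i φ x = 0 := by
    rw [pd, image_eq_zero_of_notMem_tsupport fun h => hx (hφ.2.2 (tsupport_fderiv_subset ℝ h)),
      zero_apply]
  have hpdf : Continuous (pd i f) := (hf.continuous_fderiv (by simp)).clm_apply continuous_const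
  rw [setIntegral_eq_integral_of_forall_compl_eq_zero fun x hx => by rw [hpdφ_zero x hx, mul_zero],
    setIntegral_eq_integral_of_forall_compl_eq_zero
      fun x hx => by rw [hφ.eq_zero_of_notMem hx, mul_zero]]
  exact integral_mul_fderiv_eq_neg_fderiv_mul_of_integrable
    ((hpdf.mul hφ_cont).integrable_of_hasCompactSupport hφ.2.1.mul_left)
    ((hf.continuous.mul (hφ.continuous_pd i)).integrable_of_hasCompactSupport
      (hφ.hasCompactSupport_pd i).mul_left)
    ((hf.continuous.mul hφ_cont).integrable_of_hasCompactSupport hφ.2.1.mul_left)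
    (fun x _ => hf.differentiable (by simp) x) (fun x _ => hφ.1.differentiable (by simp) x)

lemma HasWeakPD.sub (h₁ : HasWeakPD G i f₁ u₁) (h₂ : HasWeakPD G i f₂ u₂)
    (hf₁ : IntegrableOn f₁ G) (hf₂ : IntegrableOn f₂ G) (hu₁ : IntegrableOn u₁ G)
    (hu₂ : IntegrableOn u₂ G) : HasWeakPD G i (fun x => f₁ x - f₂ x) (fun x => u₁ x - u₂ x) := by
  intro φ hφ
  have hpd {f : E2 → ℝ} (hf : IntegrableOn f G) : IntegrableOn (fun x => f x * pd i φ x) G :=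
    integrableOn_mul_of_hasCompactSupport hf (hφ.continuous_pd i) (hφ.hasCompactSupport_pd i)
  have hmul {f : E2 → ℝ} (hf : IntegrableOn f G) : IntegrableOn (fun x => f x * φ x) G :=
    integrableOn_mul_of_hasCompactSupport hf hφ.1.continuous hφ.2.1
  simp only [sub_mul]
  rw [integral_sub (hpd hf₁) (hpd hf₂), integral_sub (hmul hu₁) (hmul hu₂), h₁ φ hφ, h₂ φ hφ]
  ring

lemma HasGagliardoGradient.congr_ae (h : HasGagliardoGradient θ G f₁ g)
    (hf : f₂ =ᵐ[volume.restrict G] f₁) : HasGagliardoGradient θ G f₂ g where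
  hasWeakPD i φ hφ := by
    rw [← h.hasWeakPD i φ hφ]
    exact integral_congr_ae (hf.mono fun x hx => by simp only [hx])
  integrableOn := h.integrableOn
  gagFin := h.gagFin

lemma HasGagliardoGradient.sub_clm (hfg : HasGagliardoGradient θ G f g) (hf : IntegrableOn f G)
    (hbdd : Bornology.IsBounded G) (L : E2 →L[ℝ] ℝ) :
    HasGagliardoGradient θ G (fun x => f x - L x)
      (fun i x => g i x - L (EuclideanSpace.single i 1)) where
  hasWeakPD i := by
    have hL : IntegrableOn L G :=
      (L.continuous.continuousOn.integrableOn_compact hbdd.isCompact_closure).mono_set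
        subset_closure
    have hpd : pd i L = fun _ => L (EuclideanSpace.single i 1) := by
      ext x
      rw [pd, L.fderiv]
    have hLweak : HasWeakPD G i L (pd i L) := hasWeakPD_of_contDiff L.contDiff
    rw [hpd] at hLweak
    exact (hfg.hasWeakPD i).sub hLweak hf hL (hfg.integrableOn i)
      (integrableOn_const hbdd.measure_lt_top.ne)
  integrableOn i := (hfg.integrableOn i).sub (integrableOn_const hbdd.measure_lt_top.ne)
  gagFin i := by simpa only [GagFin, sub_sub_sub_cancel_right] using hfg.gagFin i

lemma gradSeminorm_sub_const (θ : ℝ) (G : Set E2) (g : Fin 2 → E2 → ℝ) (m : Fin 2 → ℝ) :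
    gradSeminorm θ G (fun i x => g i x - m i) = gradSeminorm θ G g := by
  simp only [gradSeminorm, gagSq, sub_sub_sub_cancel_right]

lemma exists_abs_sub_sub_clm_le (hG : IsOpen G) (hconv : Convex ℝ G) (hne : G.Nonempty)
    (hbdd : Bornology.IsBounded G) (hθ : 0 < θ) (hθ1 : θ < 1) :
    ∃ C, 0 < C ∧ ∀ (f : E2 → ℝ) (g : Fin 2 → E2 → ℝ), HasGagliardoGradient θ G f g →
      ContinuousOn f (closure G) → ∃ L : E2 →L[ℝ] ℝ, ∀ x ∈ closure G, ∀ y ∈ closure G,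
        |(f x - f y) - (L x - L y)| ≤ C * dist x y ^ θ * gradSeminorm θ G g := by
  obtain ⟨Φ, hΦ⟩ := exists_isTestDensity hG hne
  obtain ⟨C, hC, hholder⟩ := exists_abs_sub_le_of_mean_zero hG hconv hbdd hθ hθ1 hΦ
  refine ⟨C, hC, fun f g hfg hcont => ?_⟩
  let L : E2 →L[ℝ] ℝ := ∑ i, (∫ x in G, g i x * Φ x) • EuclideanSpace.proj i
  have hL (i : Fin 2) : L (EuclideanSpace.single i 1) = ∫ x in G, g i x * Φ x := by
    fin_cases i <;> simp [L]
  have hf : IntegrableOn f G :=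
    (hcont.integrableOn_compact hbdd.isCompact_closure).mono_set subset_closure
  have hmean (i : Fin 2) : ∫ x in G, (g i x - L (EuclideanSpace.single i 1)) * Φ x = 0 := by
    have hmass : ∫ x in G, Φ x = 1 :=
      (setIntegral_eq_integral_of_forall_compl_eq_zero
        fun _ => hΦ.isTestFun.eq_zero_of_notMem).trans hΦ.integral_eq_one
    simp only [sub_mul]
    rw [integral_sub (integrableOn_mul_of_hasCompactSupport (hfg.integrableOn i)
        hΦ.isTestFun.1.continuous hΦ.isTestFun.2.1)
      ((hΦ.isTestFun.1.continuous.integrable_of_hasCompactSupport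
        hΦ.isTestFun.2.1).integrableOn.const_mul _), integral_const_mul, hmass, mul_one, hL,
      sub_self]
  refine ⟨L, fun x hx y hy => ?_⟩
  rw [sub_sub_sub_comm, ← gradSeminorm_sub_const θ G g fun i => L (EuclideanSpace.single i 1)]
  exact hholder _ _ (hfg.sub_clm hf hbdd L) (hcont.sub L.continuous.continuousOn) hmean x hx y hy

theorem holder_bound_refTri_general (hθ : 0 < θ) (hθ1 : θ < 1) (hG : IsOpen G)
    (hconv : Convex ℝ G) (hbdd : Bornology.IsBounded G) {V : Set E2} (hV : V ⊆ closure G)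
    (hspan : affineSpan ℝ V = ⊤) :
    ∃ C : ℝ, 0 < C ∧ ∀ (w : E2 → ℝ) (g : Fin 2 → E2 → ℝ) (ψ : E2 → ℝ),
      HasGagliardoGradient θ G w g → ContinuousOn ψ (closure G) →
      ψ =ᵐ[volume.restrict G] w → (∀ v ∈ V, ψ v = 0) →
      ∀ x ∈ closure G, ∀ y ∈ closure G,
        |ψ x - ψ y| ≤ C * dist x y ^ θ * gradSeminorm θ G g := by
  have hne : G.Nonempty := by
    rcases V.eq_empty_or_nonempty with rfl | ⟨v, hv⟩
    · simp at hspan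
    · exact closure_nonempty_iff.1 ⟨v, hV hv⟩
  obtain ⟨C₁, hC₁, hcorrect⟩ := exists_abs_sub_sub_clm_le hG hconv hne hbdd hθ hθ1
  obtain ⟨C₂, hC₂, hspread⟩ :=
    exists_abs_sub_le_of_abs_sub_sub_clm_le hbdd.closure hV hspan hθ.le hθ1.le
  refine ⟨C₂ * C₁, by positivity, fun w g ψ hwg hψ hψw hψV x hx y hy => ?_⟩
  obtain ⟨L, hL⟩ := hcorrect ψ g (hwg.congr_ae hψw) hψ
  simp only [mul_right_comm C₁] at hL
  have hN : 0 ≤ gradSeminorm θ G g := Real.sqrt_nonneg _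
  exact (hspread ψ L _ (by positivity) hψV hL x hx y hy).trans_eq (by ring)

end AffineCorrection

section ReferenceTriangle

lemma isOpen_refTri : IsOpen refTri := by
  have hcoord (i : Fin 2) : Continuous fun x : E2 => x i := by fun_prop
  exact (isOpen_lt continuous_const (hcoord 0)).inter
    ((isOpen_lt continuous_const (hcoord 1)).inter
      (isOpen_lt ((hcoord 0).add (hcoord 1)) continuous_const))

lemma convex_refTri : Convex ℝ refTri := by
  rintro x ⟨hx0, hx1, hx⟩ y ⟨hy0, hy1, hy⟩ a b ha hb hab
  simp only [refTri, mem_ofPred_eq, PiLp.add_apply, PiLp.smul_apply, smul_eq_mul]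
  rcases ha.eq_or_lt with rfl | ha'
  · simp_all
  · exact ⟨by positivity, by positivity, by nlinarith⟩

lemma isBounded_refTri : Bornology.IsBounded refTri := by
  refine (isBounded_closedBall (x := (0 : E2)) (r := 1)).subset ?_
  rintro x ⟨hx0, hx1, hx⟩
  rw [mem_closedBall_zero_iff, EuclideanSpace.norm_eq, Real.sqrt_le_one, Fin.sum_univ_two]
  simp only [Real.norm_eq_abs, sq_abs]
  nlinarith

lemma vertices_subset_closure_refTri :
    insert 0 (range fun i : Fin 2 => (EuclideanSpace.single i 1 : E2)) ⊆ closure refTri := by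
  have hvertex (v : E2) (hv : 0 ≤ v 0 ∧ 0 ≤ v 1 ∧ v 0 + v 1 ≤ 1) : v ∈ closure refTri := by
    have hsegment : openSegment ℝ v !₂[1 / 3, 1 / 3] ⊆ refTri := by
      rintro _ ⟨a, b, ha, hb, hab, rfl⟩
      simp only [refTri, mem_ofPred_eq, PiLp.add_apply, PiLp.smul_apply, smul_eq_mul,
        Matrix.cons_val_zero, Matrix.cons_val_one]
      exact ⟨by nlinarith, by nlinarith, by nlinarith⟩
    exact closure_mono hsegment
      (segment_subset_closure_openSegment (left_mem_segment ℝ v _))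
  rintro v (rfl | ⟨i, rfl⟩)
  · exact hvertex 0 (by simp)
  · exact hvertex _ (by fin_cases i <;> simp)

lemma affineSpan_vertices_eq_top :
    affineSpan ℝ (insert 0 (range fun i : Fin 2 => (EuclideanSpace.single i 1 : E2))) = ⊤ := by
  have hbasis : (fun i : Fin 2 => (EuclideanSpace.single i 1 : E2)) =
      EuclideanSpace.basisFun (Fin 2) ℝ :=
    funext fun i => (EuclideanSpace.basisFun_apply (Fin 2) ℝ i).symm
  refine SetLike.coe_injective ?_
  rw [affineSpan_insert_zero, hbasis, ← OrthonormalBasis.coe_toBasis, Module.Basis.span_eq,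
    Submodule.top_coe, AffineSubspace.top_coe]

end ReferenceTriangle

/-- **Hölder-type bound on the reference triangle** (first step in the proof of
Lemma 3.4): for `0 < θ < 1/2` there is `C` such that every `w ∈ H^{1+θ}(T̂)` whose
continuous representative vanishes at the three vertices of the reference triangle
satisfies `|w(x) − w(y)| ≤ C |x − y|^θ |w|_{1+θ,T̂}` for all `x, y` in the closed
reference triangle.  Here `g i` are the weak partial derivatives of `w` and `ψ` is the
continuous representative. -/
theorem holder_bound_refTri (θ : ℝ) (hθ0 : 0 < θ) (hθ : θ < 1 / 2) :
    ∃ C : ℝ, 0 < C ∧ ∀ (w : E2 → ℝ) (g : Fin 2 → E2 → ℝ) (ψ : E2 → ℝ),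
      MemLp w 2 (volume.restrict refTri) →
      (∀ i, HasWeakPD refTri i w (g i)) →
      (∀ i, MemLp (g i) 2 (volume.restrict refTri)) →
      (∀ i, GagFin θ refTri (g i)) →
      ContinuousOn ψ (closure refTri) →
      (∀ᵐ x ∂(volume.restrict refTri), ψ x = w x) →
      ψ 0 = 0 → ψ (EuclideanSpace.single 0 1) = 0 → ψ (EuclideanSpace.single 1 1) = 0 →
      ∀ x ∈ closure refTri, ∀ y ∈ closure refTri,
        |ψ x - ψ y| ≤ C * dist x y ^ θ *
          Real.sqrt (∑ i : Fin 2, gagSq θ refTri (g i)) := by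
  obtain ⟨C, hC, hbound⟩ := holder_bound_refTri_general hθ0 (by linarith) isOpen_refTri
    convex_refTri isBounded_refTri vertices_subset_closure_refTri affineSpan_vertices_eq_top
  have : IsFiniteMeasure (volume.restrict refTri) :=
    isFiniteMeasure_restrict.2 isBounded_refTri.measure_lt_top.ne
  refine ⟨C, hC, fun w g ψ _ hwg hg hgag hψ hψw h0 h1 h2 => ?_⟩
  refine hbound w g ψ ⟨hwg, fun i => (hg i).integrable one_le_two, hgag⟩ hψ hψw ?_
  rintro _ (rfl | ⟨i, rfl⟩)
  · exact h0
  · fin_cases i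
    exacts [h1, h2]

end
end
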